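/- arXiv:1303.5509 — 2 statements merged into one kernel-verified Lean document; each statement's English description precedes it below -/
import Mathlib

section
/- Let q be a prime power and let ℓ be a line of PG(2,q³). The number of order-q-subplanes of PG(2,q³) that are tangent to ℓ (i.e. meet ℓ in exactly one point) is q⁷(q³−1)(q³+1)(q²+q+1). -/
namespace TangentSplashPaper

open Projectivization

/-- The point set of the projective plane `PG(2,K)`. -/
abbrev PGPoint (K : Type*) [Field K] := Projectivization K (Fin 3 → K)

/-- `ℓ` is a line of `PG(2,K)`: the set of points lying in a fixed
2-dimensional linear subspace. -/
def IsLine {K : Type*} [Field K] (ℓ : Set (PGPoint K)) : Prop :=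
  ∃ W : Submodule K (Fin 3 → K), Module.finrank K W = 2 ∧
    ℓ = {P : PGPoint K | P.submodule ≤ W}

/-- The distinguished line `ℓ∞` of `PG(2,K)`: points whose last homogeneous
coordinate vanishes. -/
def linf (K : Type*) [Field K] : Set (PGPoint K) := {P : PGPoint K | P.rep 2 = 0}

/-- The homography of `PG(2,K)` induced by a linear automorphism of `K³`;
as maps of point sets, these are exactly the elements of `PGL(3,K)`. -/
def hmap {K : Type*} [Field K] (f : (Fin 3 → K) ≃ₗ[K] (Fin 3 → K)) :
    PGPoint K → PGPoint K :=
  Projectivization.map f.toLinearMap f.injective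

/-- The base subplane `PG(2,F)`: points admitting homogeneous coordinates in
the subfield `F`. -/
def basePlane (F K : Type*) [Field F] [Field K] [Algebra F K] : Set (PGPoint K) :=
  {P : PGPoint K | ∃ v : Fin 3 → K, ∃ hv : v ≠ 0, P = Projectivization.mk K v hv ∧
    ∀ i, v i ∈ (algebraMap F K).range}

/-- An order-`q`-subplane of `PG(2,K)` (`q = |F|`): an image of `PG(2,F)`
under a homography. -/
def IsSubplane (F : Type*) {K : Type*} [Field F] [Field K] [Algebra F K]
    (S : Set (PGPoint K)) : Prop :=
  ∃ f : (Fin 3 → K) ≃ₗ[K] (Fin 3 → K), S = hmap f '' basePlane F K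

/-- An order-`q`-subline of `PG(2,K)`: the intersection of an order-`q`-subplane
with a line of `PG(2,K)` meeting it in `q+1` points. -/
def IsSubline (F : Type*) {K : Type*} [Field F] [Field K] [Algebra F K] (q : ℕ)
    (b : Set (PGPoint K)) : Prop :=
  ∃ S ℓ : Set (PGPoint K), IsSubplane F S ∧ IsLine ℓ ∧
    (S ∩ ℓ).ncard = q + 1 ∧ b = S ∩ ℓ

/-- The splash of a subplane `π` on `ℓ∞`: all points of `ℓ∞` lying on a line
of `PG(2,K)` spanned by two points of `π`. -/
def splash {K : Type*} [Field K] (π : Set (PGPoint K)) : Set (PGPoint K) :=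
  {X : PGPoint K | X ∈ linf K ∧ ∃ P Q : PGPoint K, P ∈ π ∧ Q ∈ π ∧ P ≠ Q ∧
    ∃ ℓ : Set (PGPoint K), IsLine ℓ ∧ P ∈ ℓ ∧ Q ∈ ℓ ∧ X ∈ ℓ}

/-- `S` is a tangent splash of `ℓ∞` with centre `T`: `S` is the splash of some
order-`q`-subplane meeting `ℓ∞` exactly in the point `T`. -/
def IsTangentSplash (F : Type*) {K : Type*} [Field F] [Field K] [Algebra F K]
    (S : Set (PGPoint K)) (T : PGPoint K) : Prop :=
  ∃ π : Set (PGPoint K), IsSubplane F π ∧ π ∩ linf K = {T} ∧ S = splash π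

/-- The set `t_P`: points of `ℓ∞` lying on the extension of a line of the
subplane `π` through the point `P` (lines of `π` are the lines of `PG(2,K)`
meeting `π` in `q+1` points). -/
def pencilTrace {K : Type*} [Field K] (q : ℕ) (π : Set (PGPoint K))
    (P : PGPoint K) : Set (PGPoint K) :=
  {X : PGPoint K | X ∈ linf K ∧ ∃ ℓ : Set (PGPoint K), IsLine ℓ ∧ P ∈ ℓ ∧
    (π ∩ ℓ).ncard = q + 1 ∧ X ∈ ℓ}

/-!
Everything is counted through frames, for subgeometries `PG(n,F)` of `PG(n,K)` and a hyperplane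
`φ = 0`. A subgeometry is the linear set of the `F`-span `L` of a `K`-basis, and it determines `L`
up to a factor in `Kˣ`. It is tangent to the hyperplane iff the kernel of `φ` on `L` is
one-dimensional over `F`, i.e. iff `L` has an `F`-basis `v` with `φ (v 0) = 0` and
`φ (v 1), …, φ (v n)` linearly independent over `F`.

With `q = |F|` and `Q = |K|`, such tangent frames are counted by first choosing the values
`φ (v i)` and then a `K`-basis of `V` with these values: since `GL(V)` is transitive on nonzero
functionals, the number of the latter does not depend on the values. On the other hand a tangent
subgeometry has `(Q - 1) ∏ i < n, (q ^ (n + 1) - q ^ (i + 1))` tangent frames, and dividing gives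
the number of tangent subgeometries.
-/

lemma natCard_eq_mul_of_natCard_fiber {α β : Type*} [Finite α] [Finite β] {f : α → β} {N : ℕ}
    (hf : ∀ b, Nat.card {a // f a = b} = N) : Nat.card α = Nat.card β * N := by
  have := Fintype.ofFinite β
  rw [← Nat.card_congr (Equiv.sigmaFiberEquiv f), Nat.card_sigma]
  simp only [hf, Finset.sum_const, Finset.card_univ, smul_eq_mul, Nat.card_eq_fintype_card]

lemma natCard_subtype_ne_zero {α : Type*} [Zero α] [Finite α] :
    Nat.card {x : α // x ≠ 0} = Nat.card α - 1 := by
  rw [← Set.ncard_singleton (0 : α), ← Set.ncard_compl]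
  rfl

section Counting

variable {K V : Type*} [Field K] [AddCommGroup V] [Module K V]

lemma exists_linearEquiv_apply_eq {x y : V} (hx : x ≠ 0) (hy : y ≠ 0) :
    ∃ g : V ≃ₗ[K] V, g x = y := by
  have := linearEquiv_is_two_pretransitive K V
  have : MulAction.IsPretransitive (V ≃ₗ[K] V) (Projectivization K V) :=
    MulAction.isPretransitive_of_is_two_pretransitive
  obtain ⟨g, hg⟩ := MulAction.exists_smul_eq (V ≃ₗ[K] V)
    (Projectivization.mk K x hx) (Projectivization.mk K y hy)
  rw [smul_mk, mk_eq_mk_iff] at hg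
  obtain ⟨a, ha⟩ := hg
  exact ⟨g ≪≫ₗ LinearEquiv.smulOfUnit a⁻¹, inv_smul_eq_iff.2 ha.symm⟩

lemma exists_linearEquiv_dual_apply_eq [FiniteDimensional K V] {φ ψ : Module.Dual K V}
    (hφ : φ ≠ 0) (hψ : ψ ≠ 0) : ∃ g : V ≃ₗ[K] V, ∀ x, φ (g x) = ψ x := by
  obtain ⟨G, rfl⟩ := exists_linearEquiv_apply_eq (K := K) hφ hψ
  let ev := Module.evalEquiv K V
  refine ⟨ev ≪≫ₗ G.dualMap ≪≫ₗ ev.symm, fun x => ?_⟩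
  simp [ev]

variable [Finite V]

lemma natCard_linearIndependent [Finite K] (k : ℕ) :
    Nat.card {v : Fin k → V // LinearIndependent K v} =
      ∏ i : Fin k, (Nat.card V - Nat.card K ^ (i : ℕ)) := by
  have := Fintype.ofFinite K
  by_cases hk : k ≤ Module.finrank K V
  · rw [card_linearIndependent hk, Module.natCard_eq_pow_finrank (K := K) (V := V),
      Nat.card_eq_fintype_card]
  · have : IsEmpty {v : Fin k → V // LinearIndependent K v} :=
      ⟨fun v => hk (by simpa using v.2.fintype_card_le_finrank)⟩
    rw [Nat.card_of_isEmpty, eq_comm, Finset.prod_eq_zero_iff]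
    exact ⟨⟨_, not_le.1 hk⟩, Finset.mem_univ _, by
      rw [Module.natCard_eq_pow_finrank (K := K) (V := V), Nat.sub_self]⟩

/-- The automorphisms of `V` permute the fibres of `f` transitively, so each fibre contains a
fraction `1 / (|V| - 1)` of all the bases. -/
lemma natCard_linearIndependent_fiber [Finite K] {W : Type*} [Zero W] [Finite W] {n : ℕ}
    (hW : Nat.card W = Nat.card V) (hV : Module.finrank K V = n + 1)
    (f : {v : Fin (n + 1) → V // LinearIndependent K v} → {w : W // w ≠ 0})
    (hf : ∀ w w', ∃ g : V ≃ₗ[K] V, ∀ v, f v = w →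
      f ⟨g ∘ v, v.2.map' g.toLinearMap g.ker⟩ = w') (w : {w : W // w ≠ 0}) :
    Nat.card {v // f v = w} =
      ∏ i : Fin n, (Nat.card V - Nat.card K ^ ((i : ℕ) + 1)) := by
  have card_le (w w') : Nat.card {v // f v = w} ≤ Nat.card {v // f v = w'} := by
    obtain ⟨g, hg⟩ := hf w w'
    refine Nat.card_le_card_of_injective (fun v => ⟨_, hg v.1 v.2⟩) fun v v' h => ?_
    simpa [Subtype.ext_iff, g.injective.comp_left.eq_iff] using h
  have hbases := natCard_eq_mul_of_natCard_fiber fun w' => (card_le w' w).antisymm (card_le w w')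
  rw [natCard_linearIndependent, natCard_subtype_ne_zero, hW, Fin.prod_univ_succ] at hbases
  have hcard : 1 < Nat.card V :=
    have := Module.nontrivial_of_finrank_pos (R := K) (M := V) (by omega)
    Finite.one_lt_card
  exact Nat.eq_of_mul_eq_mul_left (Nat.sub_pos_of_lt hcard) (by simpa using hbases.symm)

lemma natCard_linearIndependent_apply_zero_eq [Finite K] {n : ℕ}
    (hV : Module.finrank K V = n + 1) {x : V} (hx : x ≠ 0) :
    Nat.card {v : Fin (n + 1) → V // LinearIndependent K v ∧ v 0 = x} =
      ∏ i : Fin n, (Nat.card V - Nat.card K ^ ((i : ℕ) + 1)) := by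
  rw [← natCard_linearIndependent_fiber rfl hV (fun v => ⟨v.1 0, v.2.ne_zero 0⟩) ?_ ⟨x, hx⟩]
  · simp only [Subtype.mk.injEq]
    exact (Nat.card_congr (Equiv.subtypeSubtypeEquivSubtypeInter
      (fun v : Fin (n + 1) → V => LinearIndependent K v) fun v => v 0 = x)).symm
  · intro x y
    obtain ⟨g, hg⟩ := exists_linearEquiv_apply_eq (K := K) x.2 y.2
    refine ⟨g, ?_⟩
    rintro v rfl
    exact Subtype.ext hg

lemma natCard_linearIndependent_dual_apply_eq [Finite K] {n : ℕ}
    (hV : Module.finrank K V = n + 1) {φ : Module.Dual K V} (hφ : φ ≠ 0) {c : Fin (n + 1) → K}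
    (hc : c ≠ 0) :
    Nat.card {v : Fin (n + 1) → V // LinearIndependent K v ∧ ∀ i, φ (v i) = c i} =
      ∏ i : Fin n, (Nat.card V - Nat.card K ^ ((i : ℕ) + 1)) := by
  let b (v : {v : Fin (n + 1) → V // LinearIndependent K v}) : Module.Basis (Fin (n + 1)) K V :=
    basisOfLinearIndependentOfCardEqFinrank v.2 (by simp [hV])
  have constr_eq_iff (v) (ψ : Module.Dual K V) :
      (b v).constr K c = ψ ↔ ∀ i, ψ (v.1 i) = c i := by
    have apply_b (i) : b v i = v.1 i := by simp [b]
    refine ⟨?_, fun h => (b v).ext fun i => ?_⟩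
    · rintro rfl i
      rw [← apply_b, Module.Basis.constr_basis]
    · rw [Module.Basis.constr_basis, apply_b, h]
  have constr_ne_zero (v) : (b v).constr K c ≠ 0 := fun h =>
    hc (funext fun i => ((constr_eq_iff v 0).1 h i).symm)
  have : Finite (Module.Dual K V) := Finite.of_injective _ DFunLike.coe_injective
  have hW : Nat.card (Module.Dual K V) = Nat.card V := by
    rw [Module.natCard_eq_pow_finrank (K := K), Subspace.dual_finrank_eq,
      ← Module.natCard_eq_pow_finrank]
  rw [← natCard_linearIndependent_fiber hW hV (fun v => ⟨_, constr_ne_zero v⟩) ?_ ⟨φ, hφ⟩]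
  · simp only [Subtype.mk.injEq, constr_eq_iff]
    exact (Nat.card_congr (Equiv.subtypeSubtypeEquivSubtypeInter
      (fun v : Fin (n + 1) → V => LinearIndependent K v) fun v => ∀ i, φ (v i) = c i)).symm
  · rintro ⟨φ, hφ⟩ ⟨ψ, hψ⟩
    obtain ⟨g, hg⟩ := exists_linearEquiv_dual_apply_eq hψ hφ
    refine ⟨g, fun v hv => ?_⟩
    rw [Subtype.mk.injEq, constr_eq_iff] at hv ⊢
    simpa [hg] using hv

end Counting

section LinearSet

open scoped Pointwise

variable {F V : Type*} (K : Type*) [Field F] [Field K] [AddCommGroup V] [Module F V] [Module K V]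

/-- The linear set of an `F`-subspace `L` of a `K`-space: the points of the projective space
over `K` that are spanned by a vector of `L`. When `L` is the `F`-span of a `K`-basis, this is a
subgeometry of order `|F|`. -/
def linearSet (L : Submodule F V) : Set (Projectivization K V) :=
  {P | ∃ x ∈ L, ∃ hx : x ≠ 0, Projectivization.mk K x hx = P}

variable {K}

variable (F) in
/-- `S` is a subgeometry `PG(n,F)` of the projective space over `K`, possibly contained in a proper
subspace. -/
def IsSubgeometry (n : ℕ) (S : Set (Projectivization K V)) : Prop :=
  ∃ v : Fin (n + 1) → V, LinearIndependent K v ∧ S = linearSet K (Submodule.span F (Set.range v))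

lemma mk_mem_linearSet {L : Submodule F V} {x : V} (hxL : x ∈ L) (hx : x ≠ 0) :
    Projectivization.mk K x hx ∈ linearSet K L :=
  ⟨x, hxL, hx, rfl⟩

lemma exists_units_smul_mem_of_mk_mem_linearSet {L : Submodule F V} {x : V} {hx : x ≠ 0}
    (h : Projectivization.mk K x hx ∈ linearSet K L) : ∃ a : Kˣ, a • x ∈ L := by
  obtain ⟨y, hy, hy0, hyx⟩ := h
  obtain ⟨a, rfl⟩ := (mk_eq_mk_iff K y x hy0 hx).1 hyx
  exact ⟨a, hy⟩

lemma span_eq_of_linearIndependent {ι : Type*} [Finite ι] {v w : ι → V}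
    (hw : LinearIndependent F w) (hwv : ∀ i, w i ∈ Submodule.span F (Set.range v)) :
    Submodule.span F (Set.range w) = Submodule.span F (Set.range v) := by
  have := Fintype.ofFinite ι
  have := FiniteDimensional.span_of_finite F (Set.finite_range v)
  refine Submodule.eq_of_le_of_finrank_le (Submodule.span_le.2 (Set.range_subset_iff.2 hwv)) ?_
  rw [finrank_span_eq_card hw]
  exact finrank_range_le_card v

variable [Algebra F K] [IsScalarTower F K V]

lemma linearSet_units_smul (a : Kˣ) (L : Submodule F V) : linearSet K (a • L) = linearSet K L := by
  ext P
  constructor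
  · rintro ⟨_, ⟨x, hx, rfl⟩, hax, rfl⟩
    refine ⟨x, hx, ?_, ?_⟩
    · rintro rfl
      simp at hax
    · exact ((mk_eq_mk_iff K _ _ _ _).2 ⟨a, rfl⟩).symm
  · rintro ⟨x, hx, hx0, rfl⟩
    exact ⟨a • x, Submodule.smul_mem_pointwise_smul x a L hx, (smul_ne_zero_iff_ne a).2 hx0,
      (mk_eq_mk_iff K _ _ _ _).2 ⟨a, rfl⟩⟩

lemma span_range_units_smul {ι : Type*} (a : Kˣ) (v : ι → V) :
    Submodule.span F (Set.range (a • v)) = a • Submodule.span F (Set.range v) := by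
  rw [show Set.range (a • v) = a • Set.range v from (Set.smul_set_range ..).symm]
  exact Submodule.span_smul a (Set.range v)

lemma linearIndependent_of_mem_span {ι : Type*} [Finite ι] {v w : ι → V}
    (hv : LinearIndependent K v) (hw : LinearIndependent F w)
    (hwv : ∀ i, w i ∈ Submodule.span F (Set.range v)) : LinearIndependent K w := by
  have := Fintype.ofFinite ι
  rw [linearIndependent_iff_card_eq_finrank_span, Set.finrank,
    ← Submodule.span_span_of_tower F K (Set.range w), span_eq_of_linearIndependent hw hwv,
    Submodule.span_span_of_tower, finrank_span_eq_card hv]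

lemma exists_units_smul_span_eq {ι : Type*} [Finite ι] [Nonempty ι] {v w : ι → V}
    (hv : LinearIndependent K v)
    (h : linearSet K (Submodule.span F (Set.range v)) ⊆
      linearSet K (Submodule.span F (Set.range w))) :
    ∃ a : Kˣ, a • Submodule.span F (Set.range v) = Submodule.span F (Set.range w) := by
  have := Fintype.ofFinite ι
  have mem_span (i) : v i ∈ Submodule.span F (Set.range v) :=
    Submodule.subset_span (Set.mem_range_self i)
  have sum_ne_zero : ∑ i, v i ≠ 0 := fun h0 =>
    one_ne_zero (Fintype.linearIndependent_iff.1 hv 1 (by simpa using h0) (Classical.arbitrary ι))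
  choose a ha using fun i =>
    exists_units_smul_mem_of_mk_mem_linearSet (h (mk_mem_linearSet (mem_span i) (hv.ne_zero i)))
  obtain ⟨μ, hμ⟩ := exists_units_smul_mem_of_mk_mem_linearSet
    (h (mk_mem_linearSet (sum_mem fun i _ => mem_span i) sum_ne_zero))
  -- The vectors `a i • v i` form an `F`-basis of the span of `w`, so each `μ / a i` lies in `F`.
  have hav : LinearIndependent F (a • v) := (hv.units_smul a).restrict_scalars' F
  rw [← span_eq_of_linearIndependent hav ha, Submodule.mem_span_range_iff_exists_fun] at hμ
  obtain ⟨c, hc⟩ := hμ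
  have μ_eq (i) : c i • (a i : K) = μ := by
    refine sub_eq_zero.1 (Fintype.linearIndependent_iff.1 hv (fun i => c i • (a i : K) - μ) ?_ i)
    simpa [sub_smul, ← Finset.smul_sum, sub_eq_zero, Units.smul_def] using hc
  refine ⟨μ, ?_⟩
  rw [← span_range_units_smul]
  refine span_eq_of_linearIndependent ((hv.units_smul fun _ => μ).restrict_scalars' F) fun i => ?_
  rw [Pi.smul_apply, Units.smul_def, ← μ_eq i, smul_assoc]
  exact Submodule.smul_mem _ (c i) (ha i)

end LinearSet

section Tangency

variable {F K V : Type*} [Field F] [Field K] [AddCommGroup V] [Module K V] [Algebra F K]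

/-- The hyperplane of projective space with equation `φ = 0`. -/
def hyperplane (φ : Module.Dual K V) : Set (Projectivization K V) :=
  {P | P.submodule ≤ LinearMap.ker φ}

/-- Tangency of a point set to the hyperplane `φ = 0`: they have exactly one common point. -/
def IsTangent (φ : Module.Dual K V) (S : Set (Projectivization K V)) : Prop :=
  ∃ T, S ∩ hyperplane φ = {T}

lemma mk_mem_hyperplane {φ : Module.Dual K V} {x : V} (hx : x ≠ 0) :
    Projectivization.mk K x hx ∈ hyperplane φ ↔ φ x = 0 := by
  simp [hyperplane, Submodule.span_singleton_le_iff_mem]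

variable (F) in
/-- A `K`-basis `v` of a subspace whose `F`-span is a subgeometry tangent to the hyperplane `φ = 0`
at the point spanned by `v 0`; see `isTangent_linearSet_span_iff`. -/
structure IsTangentFrame (φ : Module.Dual K V) {n : ℕ} (v : Fin (n + 1) → V) : Prop where
  linearIndependent : LinearIndependent K v
  apply_zero : φ (v 0) = 0
  linearIndependent_apply_succ : LinearIndependent F fun i : Fin n => φ (v i.succ)

lemma natCard_isTangentFrame [Finite K] [Finite V] {φ : Module.Dual K V} {n : ℕ}
    (hV : Module.finrank K V = n + 2) (hφ : φ ≠ 0) :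
    Nat.card {v : Fin (n + 2) → V // IsTangentFrame F φ v} =
      (∏ i : Fin (n + 1), (Nat.card K - Nat.card F ^ (i : ℕ))) *
        ∏ i : Fin (n + 1), (Nat.card V - Nat.card K ^ ((i : ℕ) + 1)) := by
  have : Finite F := Finite.of_injective _ (algebraMap F K).injective
  rw [← natCard_linearIndependent (K := F) (V := K)]
  refine natCard_eq_mul_of_natCard_fiber
    (f := fun v => ⟨_, v.2.linearIndependent_apply_succ⟩) fun c => ?_
  have hc : (Fin.cons 0 c.1 : Fin (n + 2) → K) ≠ 0 := fun h =>
    c.2.ne_zero 0 (by simpa using congrFun h 1)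
  rw [← natCard_linearIndependent_dual_apply_eq hV hφ hc]
  refine Nat.card_congr <| (Equiv.subtypeSubtypeEquivSubtypeExists _ _).trans <|
    Equiv.subtypeEquivRight fun v => ⟨?_, ?_⟩
  · rintro ⟨hv, hvc⟩
    exact ⟨hv.linearIndependent, Fin.cases hv.apply_zero (congrFun (congrArg Subtype.val hvc))⟩
  · rintro ⟨hv, hvc⟩
    have apply_succ : (fun i : Fin (n + 1) => φ (v i.succ)) = c := funext fun i => hvc i.succ
    exact ⟨⟨hv, hvc 0, apply_succ ▸ c.2⟩, Subtype.ext apply_succ⟩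

variable [Module F V] [IsScalarTower F K V] {φ : Module.Dual K V} {n : ℕ} {v : Fin (n + 1) → V}

namespace IsTangentFrame

lemma exists_smul_eq (hv : IsTangentFrame F φ v) {x : V}
    (hx : x ∈ Submodule.span F (Set.range v)) (hφx : φ x = 0) : ∃ c : F, c • v 0 = x := by
  obtain ⟨c, rfl⟩ := (Submodule.mem_span_range_iff_exists_fun F).1 hx
  have hc := Fintype.linearIndependent_iff.1 hv.linearIndependent_apply_succ (fun i => c i.succ)
    (by simpa [Fin.sum_univ_succ, hv.apply_zero, LinearMap.map_smul_of_tower] using hφx)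
  exact ⟨c 0, by simp [Fin.sum_univ_succ, hc]⟩

lemma inter_hyperplane_eq (hv : IsTangentFrame F φ v) :
    linearSet K (Submodule.span F (Set.range v)) ∩ hyperplane φ =
      {Projectivization.mk K (v 0) (hv.linearIndependent.ne_zero 0)} := by
  refine Set.eq_singleton_iff_unique_mem.2 ⟨⟨mk_mem_linearSet
    (Submodule.subset_span (Set.mem_range_self 0)) _, (mk_mem_hyperplane _).2 hv.apply_zero⟩, ?_⟩
  rintro _ ⟨⟨x, hx, hx0, rfl⟩, hφx⟩
  obtain ⟨c, rfl⟩ := hv.exists_smul_eq hx ((mk_mem_hyperplane hx0).1 hφx)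
  exact (mk_eq_mk_iff' K _ _ _ _).2 ⟨algebraMap F K c, algebraMap_smul K c (v 0)⟩

end IsTangentFrame

lemma isTangent_linearSet_span_iff (hv : LinearIndependent K v) (hφv : φ (v 0) = 0) :
    IsTangent φ (linearSet K (Submodule.span F (Set.range v))) ↔ IsTangentFrame F φ v := by
  refine ⟨?_, fun h => ⟨_, h.inter_hyperplane_eq⟩⟩
  rintro ⟨T, hT⟩
  refine ⟨hv, hφv, Fintype.linearIndependent_iff.2 fun c hc => ?_⟩
  have mem_span (i) : v i ∈ Submodule.span F (Set.range v) :=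
    Submodule.subset_span (Set.mem_range_self i)
  have mk_eq {y : V} (hy : y ∈ Submodule.span F (Set.range v)) (hy0 : y ≠ 0) (hφy : φ y = 0) :
      Projectivization.mk K y hy0 = T :=
    hT.subset ⟨mk_mem_linearSet hy hy0, (mk_mem_hyperplane hy0).2 hφy⟩
  obtain ⟨a, ha⟩ : ∃ a : K, a • v 0 = ∑ i : Fin n, c i • v i.succ := by
    by_cases hx0 : ∑ i : Fin n, c i • v i.succ = 0
    · exact ⟨0, by rw [hx0, zero_smul]⟩
    · refine (mk_eq_mk_iff' K _ _ hx0 (hv.ne_zero 0)).1 ((mk_eq ?_ _ ?_).trans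
        (mk_eq (mem_span 0) _ hφv).symm)
      · exact sum_mem fun i _ => Submodule.smul_mem _ _ (mem_span i.succ)
      · simpa [LinearMap.map_smul_of_tower] using hc
  have coeff_eq_zero := Fintype.linearIndependent_iff.1 hv
    (Fin.cons (-a) fun i => algebraMap F K (c i)) (by simp [Fin.sum_univ_succ, ha])
  exact fun i => by simpa using coeff_eq_zero i.succ

lemma exists_isTangentFrame_of_isTangent (hv : LinearIndependent K v)
    (hT : IsTangent φ (linearSet K (Submodule.span F (Set.range v)))) :
    ∃ w : Fin (n + 1) → V, IsTangentFrame F φ w ∧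
      Submodule.span F (Set.range w) = Submodule.span F (Set.range v) := by
  have ⟨T, hT'⟩ := hT
  obtain ⟨⟨x, hx, hx0, rfl⟩, hφx⟩ := hT'.ge rfl
  have mem_span (i) : v i ∈ Submodule.span F (Set.range v) :=
    Submodule.subset_span (Set.mem_range_self i)
  let u (i : Fin (n + 1)) : Submodule.span F (Set.range v) := ⟨v i, mem_span i⟩
  have hu : LinearIndependent F u :=
    LinearIndependent.of_comp (Submodule.subtype _) (hv.restrict_scalars' F)
  obtain ⟨g, hg⟩ := exists_linearEquiv_apply_eq (K := F) (hu.ne_zero 0)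
    (y := ⟨x, hx⟩) (by simpa using hx0)
  let w (i : Fin (n + 1)) : V := g (u i)
  have hw : LinearIndependent F w :=
    (hu.map' g.toLinearMap g.ker).map' (Submodule.subtype _) (Submodule.ker_subtype _)
  have hwv (i) : w i ∈ Submodule.span F (Set.range v) := (g (u i)).2
  have span_eq := span_eq_of_linearIndependent hw hwv
  have hφw : φ (w 0) = 0 := by simpa [w, hg] using (mk_mem_hyperplane hx0).1 hφx
  refine ⟨w, (isTangent_linearSet_span_iff (linearIndependent_of_mem_span hv hw hwv) hφw).1 ?_,
    span_eq⟩
  rwa [span_eq]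

lemma IsTangentFrame.exists_units_smul_smul_mem (hv : IsTangentFrame F φ v)
    {w : Fin (n + 1) → V} (hw : IsTangentFrame F φ w)
    (h : linearSet K (Submodule.span F (Set.range w)) =
      linearSet K (Submodule.span F (Set.range v))) :
    ∃ a : Kˣ, (∀ i, a • w i ∈ Submodule.span F (Set.range v)) ∧ a • w 0 = v 0 := by
  obtain ⟨a, ha⟩ := exists_units_smul_span_eq hw.linearIndependent h.subset
  have haw (i) : a • w i ∈ Submodule.span F (Set.range v) := by
    rw [← ha, ← span_range_units_smul]
    exact Submodule.subset_span (Set.mem_range_self i)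
  obtain ⟨c, hc⟩ := hv.exists_smul_eq (haw 0) (by simp [Units.smul_def, hw.apply_zero])
  have hc0 : c ≠ 0 := by
    rintro rfl
    exact (smul_ne_zero_iff_ne a).2 (hw.linearIndependent.ne_zero 0) (by simpa using hc.symm)
  let b : Kˣ := Units.map (algebraMap F K) (Units.mk0 c hc0)⁻¹
  have b_smul (x : V) : b • x = c⁻¹ • x := by simp [b, Units.smul_def, ← map_inv₀]
  refine ⟨b * a, fun i => ?_, ?_⟩
  · rw [mul_smul, b_smul]
    exact Submodule.smul_mem _ _ (haw i)
  · rw [mul_smul, b_smul, ← hc, inv_smul_smul₀ hc0]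

lemma IsTangentFrame.units_smul_coe (hv : IsTangentFrame F φ v) (a : Kˣ)
    {u : Fin (n + 1) → Submodule.span F (Set.range v)} (hu : LinearIndependent F u)
    (hu0 : (u 0 : V) = v 0) :
    IsTangentFrame F φ (fun i => a • (u i : V)) ∧
      linearSet K (Submodule.span F (Set.range fun i => a • (u i : V))) =
        linearSet K (Submodule.span F (Set.range v)) := by
  let w (i : Fin (n + 1)) : V := u i
  have hw : LinearIndependent F w := hu.map' (Submodule.subtype _) (Submodule.ker_subtype _)
  have hwK : LinearIndependent K (a • w) :=
    (linearIndependent_of_mem_span hv.linearIndependent hw fun i => (u i).2).units_smul fun _ => a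
  have linearSet_eq : linearSet K (Submodule.span F (Set.range (a • w))) =
      linearSet K (Submodule.span F (Set.range v)) := by
    rw [span_range_units_smul, linearSet_units_smul,
      span_eq_of_linearIndependent hw fun i => (u i).2]
  refine ⟨(isTangent_linearSet_span_iff hwK ?_).1 ?_, linearSet_eq⟩
  · simp [w, hu0, hv.apply_zero, Units.smul_def]
  · rw [linearSet_eq]
    exact ⟨_, hv.inter_hyperplane_eq⟩

/-- The tangent frames of a subgeometry are the `Kˣ`-multiples of the `F`-bases of the `F`-span
of `v` that start with `v 0`. -/
lemma IsTangentFrame.natCard_isTangentFrame_linearSet_eq [Finite K] (hv : IsTangentFrame F φ v) :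
    Nat.card {w : Fin (n + 1) → V // IsTangentFrame F φ w ∧
      linearSet K (Submodule.span F (Set.range w)) =
        linearSet K (Submodule.span F (Set.range v))} =
      (Nat.card K - 1) *
        ∏ i : Fin n, (Nat.card F ^ (n + 1) - Nat.card F ^ ((i : ℕ) + 1)) := by
  have : Finite F := Finite.of_injective _ (algebraMap F K).injective
  have := FiniteDimensional.span_of_finite F (Set.finite_range v)
  have : Finite (Submodule.span F (Set.range v)) := Module.finite_of_finite F
  have hfinrank : Module.finrank F (Submodule.span F (Set.range v)) = n + 1 := by
    rw [finrank_span_eq_card (hv.linearIndependent.restrict_scalars' F), Fintype.card_fin]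
  have hcard : Nat.card F ^ (n + 1) = Nat.card (Submodule.span F (Set.range v)) := by
    rw [Module.natCard_eq_pow_finrank (K := F) (V := Submodule.span F (Set.range v)), hfinrank]
  let x : Submodule.span F (Set.range v) := ⟨v 0, Submodule.subset_span (Set.mem_range_self 0)⟩
  have hx : x ≠ 0 := fun h => hv.linearIndependent.ne_zero 0 (congrArg Subtype.val h)
  rw [← Nat.card_units, hcard, ← natCard_linearIndependent_apply_zero_eq hfinrank hx,
    ← Nat.card_prod, eq_comm]
  refine Nat.card_congr (Equiv.ofBijective (fun p => ⟨fun i => p.1 • (p.2.1 i : V),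
    hv.units_smul_coe p.1 p.2.2.1 (congrArg Subtype.val p.2.2.2)⟩) ⟨?_, ?_⟩)
  · rintro ⟨a, u, _, hu0⟩ ⟨b, u', _, hu'0⟩ h
    have smul_eq (i) : a • (u i : V) = b • (u' i : V) := congrFun (congrArg Subtype.val h) i
    obtain rfl : a = b := Units.ext <| smul_left_injective K (hv.linearIndependent.ne_zero 0) <| by
      simpa [hu0, hu'0, x, Units.smul_def] using smul_eq 0
    obtain rfl : u = u' := funext fun i => Subtype.ext (smul_left_cancel a (smul_eq i))
    rfl
  · rintro ⟨w, hw, hwv⟩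
    obtain ⟨a, haw, haw0⟩ := hv.exists_units_smul_smul_mem hw hwv
    have hLI : LinearIndependent F fun i => (⟨a • w i, haw i⟩ : Submodule.span F (Set.range v)) :=
      .of_comp (Submodule.subtype _)
        ((hw.linearIndependent.units_smul fun _ => a).restrict_scalars' F)
    exact ⟨⟨a⁻¹, _, hLI, Subtype.ext haw0⟩, Subtype.ext (funext fun i => inv_smul_smul a (w i))⟩

lemma ncard_isSubgeometry_isTangent [Finite K] [Finite V] {m : ℕ} (hV : Module.finrank K V = m + 2)
    (hφ : φ ≠ 0) :
    {S | IsSubgeometry F (m + 1) S ∧ IsTangent φ S}.ncard *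
        ∏ i : Fin (m + 1), (Nat.card F ^ (m + 2) - Nat.card F ^ ((i : ℕ) + 1)) =
      (∏ i : Fin m, (Nat.card K - Nat.card F ^ ((i : ℕ) + 1))) *
        ∏ i : Fin (m + 1), (Nat.card V - Nat.card K ^ ((i : ℕ) + 1)) := by
  let toSubgeometry (v : {v : Fin (m + 2) → V // IsTangentFrame F φ v}) :
      {S | IsSubgeometry F (m + 1) S ∧ IsTangent φ S} :=
    ⟨_, ⟨v.1, v.2.linearIndependent, rfl⟩, _, v.2.inter_hyperplane_eq⟩
  have card_fiber (S) : Nat.card {v // toSubgeometry v = S} = (Nat.card K - 1) *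
      ∏ i : Fin (m + 1), (Nat.card F ^ (m + 2) - Nat.card F ^ ((i : ℕ) + 1)) := by
    obtain ⟨_, ⟨v, hv, rfl⟩, hT⟩ := S
    obtain ⟨w, hw, hwv⟩ := exists_isTangentFrame_of_isTangent hv hT
    rw [← hw.natCard_isTangentFrame_linearSet_eq]
    simp only [toSubgeometry, Subtype.mk.injEq, hwv]
    exact Nat.card_congr (Equiv.subtypeSubtypeEquivSubtypeInter (IsTangentFrame F φ) fun w =>
      linearSet K (Submodule.span F (Set.range w)) = linearSet K (Submodule.span F (Set.range v)))
  have hframes := natCard_eq_mul_of_natCard_fiber card_fiber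
  rw [natCard_isTangentFrame hV hφ, Fin.prod_univ_succ, Nat.card_coe_set_eq] at hframes
  refine Nat.eq_of_mul_eq_mul_left (Nat.sub_pos_of_lt (Finite.one_lt_card (α := K))) ?_
  simpa [mul_assoc, mul_left_comm] using hframes.symm

end Tangency

section Plane

variable {F K : Type*} [Field F] [Field K]

lemma linearSet_map {V W : Type*} [AddCommGroup V] [Module K V] [Module F V] [AddCommGroup W]
    [Module K W] [Module F W] [Algebra F K] [IsScalarTower F K V] [IsScalarTower F K W]
    (f : V →ₗ[K] W) (hf : Function.Injective f) (L : Submodule F V) :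
    linearSet K (L.map (f.restrictScalars F)) = Projectivization.map f hf '' linearSet K L := by
  ext P
  constructor
  · rintro ⟨_, ⟨x, hx, rfl⟩, hfx, rfl⟩
    exact ⟨_, mk_mem_linearSet hx (ne_zero_of_map (f := f) hfx), map_mk ..⟩
  · rintro ⟨_, ⟨x, hx, hx0, rfl⟩, rfl⟩
    exact mk_mem_linearSet (Submodule.mem_map_of_mem hx) ((map_ne_zero_iff f hf).2 hx0)

variable [Algebra F K]

lemma basePlane_eq_linearSet :
    basePlane F K = linearSet K (Submodule.span F (Set.range (Pi.basisFun K (Fin 3)))) := by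
  ext P
  simp only [basePlane, linearSet, Set.mem_ofPred_eq, Module.Basis.mem_span_iff_repr_mem,
    Pi.basisFun_repr]
  exact exists_congr fun v =>
    ⟨fun ⟨hv, hP, hvF⟩ => ⟨hvF, hv, hP.symm⟩, fun ⟨hvF, hv, hP⟩ => ⟨hv, hP.symm, hvF⟩⟩

lemma isSubplane_iff_isSubgeometry {S : Set (PGPoint K)} :
    IsSubplane F S ↔ IsSubgeometry F 2 S := by
  have span_eq_map (f : (Fin 3 → K) ≃ₗ[K] (Fin 3 → K)) :
      Submodule.span F (Set.range (f ∘ Pi.basisFun K (Fin 3))) =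
        (Submodule.span F (Set.range (Pi.basisFun K (Fin 3)))).map
          (f.toLinearMap.restrictScalars F) := by
    rw [Submodule.map_span, Set.range_comp]
    rfl
  have hmap_basePlane (f : (Fin 3 → K) ≃ₗ[K] (Fin 3 → K)) : hmap f '' basePlane F K =
      linearSet K (Submodule.span F (Set.range (f ∘ Pi.basisFun K (Fin 3)))) := by
    rw [basePlane_eq_linearSet, span_eq_map, linearSet_map _ f.injective]
    rfl
  constructor
  · rintro ⟨f, rfl⟩
    exact ⟨_, (Pi.basisFun K (Fin 3)).linearIndependent.map' f.toLinearMap f.ker,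
      hmap_basePlane f⟩
  · rintro ⟨v, hv, rfl⟩
    let b := basisOfLinearIndependentOfCardEqFinrank hv (by simp)
    refine ⟨(Pi.basisFun K (Fin 3)).equiv b (Equiv.refl _), ?_⟩
    rw [hmap_basePlane]
    congr! 4
    ext i : 1
    rw [Function.comp_apply, Module.Basis.equiv_apply]
    simp [b]

lemma exists_hyperplane_eq_of_isLine {ℓ : Set (PGPoint K)} (hℓ : IsLine ℓ) :
    ∃ φ : Module.Dual K (Fin 3 → K), φ ≠ 0 ∧ hyperplane φ = ℓ := by
  obtain ⟨W, hW, rfl⟩ := hℓ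
  have hW_lt : W < ⊤ := lt_top_iff_ne_top.2 fun h => by
    rw [h, finrank_top, Module.finrank_fin_fun] at hW
    omega
  obtain ⟨φ, hφ, hWφ⟩ := W.exists_le_ker_of_lt_top hW_lt
  have hker := Module.Dual.finrank_ker_add_one_of_ne_zero hφ
  rw [Module.finrank_fin_fun] at hker
  obtain rfl := Submodule.eq_of_le_of_finrank_eq hWφ (by omega)
  exact ⟨φ, hφ, rfl⟩

lemma eq_of_mul_cube_sub_eq {q X : ℕ} (hq : 1 < q)
    (hX : X * ((q ^ 3 - q) * (q ^ 3 - q ^ 2)) =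
      (q ^ 3 - q) * (((q ^ 3) ^ 3 - q ^ 3) * ((q ^ 3) ^ 3 - (q ^ 3) ^ 2))) :
    X = q ^ 7 * (q ^ 3 - 1) * (q ^ 3 + 1) * (q ^ 2 + q + 1) := by
  have hq2 : q ≤ q ^ 2 := Nat.le_self_pow two_ne_zero q
  have hq3 : q ^ 2 < q ^ 3 := Nat.pow_lt_pow_right hq (by norm_num)
  refine Nat.eq_of_mul_eq_mul_right (Nat.mul_pos (Nat.sub_pos_of_lt (hq2.trans_lt hq3))
    (Nat.sub_pos_of_lt hq3)) (hX.trans ?_)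
  have hq6 : (q ^ 3) ^ 2 ≤ (q ^ 3) ^ 3 := Nat.pow_le_pow_right (by positivity) (by norm_num)
  have hq9 : q ^ 3 ≤ (q ^ 3) ^ 3 := Nat.le_self_pow three_ne_zero _
  zify [hq2.trans hq3.le, hq3.le, hq6, hq9, Nat.one_le_pow 3 q (by omega)]
  ring

theorem statement7_general [Finite K] {ℓ : Set (PGPoint K)} (hℓ : IsLine ℓ) :
    {S : Set (PGPoint K) | IsSubplane F S ∧ ∃ T : PGPoint K, S ∩ ℓ = {T}}.ncard *
        ((Nat.card F ^ 3 - Nat.card F) * (Nat.card F ^ 3 - Nat.card F ^ 2)) =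
      (Nat.card K - Nat.card F) *
        ((Nat.card K ^ 3 - Nat.card K) * (Nat.card K ^ 3 - Nat.card K ^ 2)) := by
  obtain ⟨φ, hφ, rfl⟩ := exists_hyperplane_eq_of_isLine hℓ
  simpa [isSubplane_iff_isSubgeometry, IsTangent, Nat.card_fun, Fin.prod_univ_succ] using
    ncard_isSubgeometry_isTangent (F := F) (m := 1) (Module.finrank_fin_fun K) hφ

end Plane

/-- the number of order-`q`-subplanes of `PG(2,q³)` tangent to a given
line `ℓ` is `q⁷(q³−1)(q³+1)(q²+q+1)`. -/
theorem statement7 (q : ℕ) (F K : Type) [Field F] [Field K] [Fintype F] [Fintype K]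
    [Algebra F K] (hF : Fintype.card F = q) (hK : Fintype.card K = q ^ 3)
    (ℓ : Set (PGPoint K)) (hℓ : IsLine ℓ) :
    {S : Set (PGPoint K) | IsSubplane F S ∧ ∃ T : PGPoint K, S ∩ ℓ = {T}}.ncard =
      q ^ 7 * (q ^ 3 - 1) * (q ^ 3 + 1) * (q ^ 2 + q + 1) := by
  subst hF
  exact eq_of_mul_cube_sub_eq Fintype.one_lt_card <| by
    simpa only [Nat.card_eq_fintype_card, hK] using statement7_general (F := F) hℓ

end TangentSplashPaper
end

section
/- Let q be a prime power, let S_T be a tangent splash of ℓ∞ in PG(2,q³) with centre T, and let b be an order-q-subline of PG(2,q³) disjoint from ℓ∞ whose spanning line of PG(2,q³) meets ℓ∞ in a point of S_T \ {T}. Then there is exactly one order-q-subplane of PG(2,q³) that is tangent to ℓ∞, contains b, and has tangent splash equal to S_T. -/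
namespace TangentSplashPaper

open Projectivization

/-!
The splash of a subplane tangent to `ℓ∞` at `⟨t⟩` is the set of points of an `F`-subspace
`F w + U t`, where `F = GF(q)`, `K = GF(q³)`, `w` represents any other point of the splash and `U`
is an `F`-hyperplane of `K`. Fix representatives `a`, `c` of a subline disjoint from `ℓ∞`, and let
`w = c₂ a - a₂ c` represent the point in which its spanning line meets `ℓ∞`. The subplanes through
the subline that are tangent to `ℓ∞` are the `F`-spans of `t, a, c` with `⟨t⟩ ≠ ⟨w⟩` on `ℓ∞`, and
then `U` is spanned by the last coordinates `a₂` and `c₂`, whatever `t` is.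

Existence: any two `F`-hyperplanes of `K` differ by a factor in `K*`, so rescaling `t` realises the
prescribed splash. Uniqueness: two spans with the same splash but different centres would make `U`
closed under some inversion `u ↦ k / u`; if the centres agree, the two vectors `t` differ by a
factor in `K*` that stabilises `U`. As `[K : F] = 3` is odd, no element of `K` is quadratic over
`F`; hence there is no such inversion, and the stabiliser of `U` is `F*`.
-/

section

open Module Submodule
open scoped Pointwise

section CubicExtension

variable {F K : Type*} [Field F] [Field K] [Algebra F K]

lemma mem_range_algebraMap_of_quadratic_eq_zero (hodd : Odd (finrank F K)) {z : K} {p r s : F}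
    (hne : p ≠ 0 ∨ r ≠ 0 ∨ s ≠ 0)
    (hz : algebraMap F K p * z ^ 2 + algebraMap F K r * z + algebraMap F K s = 0) :
    z ∈ (algebraMap F K).range := by
  have : FiniteDimensional F K := .of_finrank_pos hodd.pos
  set f : Polynomial F := .C p * .X ^ 2 + .C r * .X + .C s with hf
  have hf0 : f ≠ 0 := by
    intro h0
    have h2 : p = 0 := by simpa [hf] using congrArg (Polynomial.coeff · 2) h0
    have h1 : r = 0 := by simpa [hf, Polynomial.coeff_C] using congrArg (Polynomial.coeff · 1) h0
    have h0 : s = 0 := by simpa [hf] using congrArg (Polynomial.coeff · 0) h0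
    tauto
  have hle : (minpoly F z).natDegree ≤ 2 :=
    (Polynomial.natDegree_le_natDegree (minpoly.degree_le_of_ne_zero F z hf0
      (by simpa [hf] using hz))).trans Polynomial.natDegree_quadratic_le
  have hdvd : (minpoly F z).natDegree ∣ finrank F K :=
    minpoly.degree_dvd (Algebra.IsIntegral.isIntegral z)
  have hoddz : Odd (minpoly F z).natDegree := hodd.of_dvd_nat hdvd
  exact minpoly.natDegree_eq_one_iff.1 (by grind)

lemma mem_range_algebraMap_of_forall_mul_mem (hodd : Odd (finrank F K)) {a b μ : K}
    (hab : LinearIndependent F ![a, b])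
    (hμ : ∀ u ∈ span F {a, b}, μ * u ∈ span F {a, b}) : μ ∈ (algebraMap F K).range := by
  have ha : a ≠ 0 := hab.ne_zero 0
  obtain ⟨x, y, hxy⟩ := mem_span_pair.1 (hμ a (subset_span (by simp)))
  obtain ⟨z, w, hzw⟩ := mem_span_pair.1 (hμ b (subset_span (by simp)))
  simp only [Algebra.smul_def] at hxy hzw
  -- `μ` is a root of the characteristic polynomial of its action on `span F {a, b}`.
  refine mem_range_algebraMap_of_quadratic_eq_zero hodd (p := 1) (r := -(x + w))
    (s := x * w - y * z) (by simp) (mul_left_cancel₀ ha ?_)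
  simp only [map_one, map_neg, map_add, map_sub, map_mul]
  linear_combination (algebraMap F K w - μ) * hxy - algebraMap F K y * hzw

lemma exists_div_notMem_span_pair (hodd : Odd (finrank F K)) {a b c : K}
    (hab : LinearIndependent F ![a, b]) (hc : c ≠ 0) :
    ∃ u ∈ span F {a, b}, u ≠ 0 ∧ c / u ∉ span F {a, b} := by
  by_contra! hinv
  have ha : a ≠ 0 := hab.ne_zero 0
  have hb : b ≠ 0 := hab.ne_zero 1
  have hsum : a + b ≠ 0 := fun h ↦ by
    simpa using (LinearIndependent.pair_iff.1 hab 1 1 (by simpa using h)).1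
  -- Inverting `c / a + c / b` again puts the harmonic sum of `a` and `b` into the span.
  have hharm : a * b / (a + b) ∈ span F {a, b} := by
    have hmem := hinv (c / a + c / b)
      (add_mem (hinv a (subset_span (by simp)) ha) (hinv b (subset_span (by simp)) hb))
    have hrw : c / a + c / b = c * (a + b) / (a * b) := by field_simp; ring
    rw [hrw] at hmem
    convert hmem (by positivity) using 1
    field_simp
  obtain ⟨x, y, hxy⟩ := mem_span_pair.1 hharm
  rw [Algebra.smul_def, Algebra.smul_def, eq_div_iff hsum] at hxy
  obtain ⟨z, hz⟩ : a / b ∈ (algebraMap F K).range := by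
    refine mem_range_algebraMap_of_quadratic_eq_zero hodd (p := x) (r := x + y - 1) (s := y)
      (by grind) ?_
    simp only [map_sub, map_add, map_one]
    field_simp
    linear_combination hxy
  refine (LinearIndependent.pair_iff' hb).1 (LinearIndependent.pair_symm_iff.1 hab) z ?_
  rw [Algebra.smul_def, hz, div_mul_cancel₀ a hb]

lemma exists_dual_ker_eq {E : Type*} [AddCommGroup E] [Module F E] [FiniteDimensional F E]
    {U : Submodule F E} (hU : finrank F U + 1 = finrank F E) :
    ∃ f : Dual F E, f ≠ 0 ∧ LinearMap.ker f = U := by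
  have hlt : U < ⊤ := lt_top_of_finrank_lt_finrank (by lia)
  obtain ⟨f, hf, hle⟩ := exists_le_ker_of_lt_top U hlt
  have := Dual.finrank_ker_add_one_of_ne_zero hf
  exact ⟨f, hf, (eq_of_le_of_finrank_eq hle (by lia)).symm⟩

lemma exists_smul_eq_of_finrank_add_one_eq [FiniteDimensional F K] {U U' : Submodule F K}
    (hU : finrank F U + 1 = finrank F K) (hU' : finrank F U' + 1 = finrank F K) :
    ∃ k : K, k ≠ 0 ∧ k • U = U' := by
  obtain ⟨f, hf, rfl⟩ := exists_dual_ker_eq hU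
  obtain ⟨g, hg, rfl⟩ := exists_dual_ker_eq hU'
  -- `k ↦ g (k * ·)` identifies `K` with its `F`-dual.
  let Φ : K →ₗ[F] Dual F K := (LinearMap.mul F K).compr₂ g
  have hinj : Function.Injective Φ := by
    rw [injective_iff_map_eq_zero]
    intro k hk
    by_contra hk0
    refine hg (LinearMap.ext fun v ↦ ?_)
    simpa [Φ, hk0] using LinearMap.congr_fun hk (k⁻¹ * v)
  obtain ⟨k, rfl⟩ := (LinearMap.injective_iff_surjective_of_finrank_eq_finrank
    Subspace.dual_finrank_eq.symm).1 hinj f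
  have hk0 : k ≠ 0 := by
    rintro rfl
    exact hf (map_zero Φ)
  refine ⟨k, hk0, ?_⟩
  ext v
  rw [← SetLike.mem_coe, coe_pointwise_smul, Set.mem_smul_set_iff_inv_smul_mem₀ hk0]
  simp [Φ, hk0]

lemma finrank_eq_of_card_eq_pow [Fintype F] [Fintype K] {n : ℕ}
    (h : Fintype.card K = Fintype.card F ^ n) : finrank F K = n :=
  Nat.pow_right_injective Fintype.one_lt_card (card_eq_pow_finrank.symm.trans h)

end CubicExtension

section PointSets

variable {F K V : Type*} [Field F] [Field K] [AddCommGroup V] [Module F V] [Module K V]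

lemma mk_ne_mk_iff {v w : V} (hv : v ≠ 0) (hw : w ≠ 0) :
    mk K v hv ≠ mk K w hw ↔ LinearIndependent K ![v, w] := by
  rw [LinearIndependent.pair_iff' hv, ne_comm, ne_eq, mk_eq_mk_iff', not_exists]

variable (K) in
/-- The `F`-linear set of an `F`-subspace `M` of a `K`-space `V`: the points of `PG(V)` that have a
homogeneous coordinate vector in `M`. -/
def points (M : Submodule F V) : Set (Projectivization K V) :=
  {P | ∃ v ∈ M, ∃ hv : v ≠ 0, P = mk K v hv}

lemma points_mono {M N : Submodule F V} (h : M ≤ N) : points K M ⊆ points K N := by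
  rintro _ ⟨v, hv, hv0, rfl⟩
  exact ⟨v, h hv, hv0, rfl⟩

lemma mk_mem_points_iff {M : Submodule F V} {v : V} (hv : v ≠ 0) :
    mk K v hv ∈ points K M ↔ ∃ c : K, c ≠ 0 ∧ c • v ∈ M := by
  constructor
  · rintro ⟨w, hw, hw0, h⟩
    obtain ⟨c, rfl⟩ := (mk_eq_mk_iff' K w v hw0 hv).1 h.symm
    exact ⟨c, (smul_ne_zero_iff.1 hw0).1, hw⟩
  · rintro ⟨c, hc, hcv⟩
    exact ⟨c • v, hcv, smul_ne_zero hc hv, (mk_eq_mk_iff' K _ _ _ _).2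
      ⟨c⁻¹, inv_smul_smul₀ hc v⟩⟩

variable [Algebra F K] [IsScalarTower F K V]

lemma points_smul {k : K} (hk : k ≠ 0) (M : Submodule F V) :
    points K (k • M) = points K M := by
  ext P
  induction P using Projectivization.ind with | h v hv
  simp only [mk_mem_points_iff, ← SetLike.mem_coe (p := k • M), coe_pointwise_smul,
    Set.mem_smul_set_iff_inv_smul_mem₀ hk, smul_smul, SetLike.mem_coe]
  constructor
  · rintro ⟨c, hc, hcv⟩
    exact ⟨k⁻¹ * c, mul_ne_zero (inv_ne_zero hk) hc, hcv⟩
  · rintro ⟨c, hc, hcv⟩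
    exact ⟨k * c, mul_ne_zero hk hc, by rwa [inv_mul_cancel_left₀ hk]⟩

/-- The `F`-subspace `F w + U t` of `V`. For independent `t` and `w` its points are `⟨t⟩` (if
`U ≠ 0`) and the points `⟨w + u t⟩` with `u ∈ U`; this is the shape of every tangent splash, with
`⟨t⟩` as the centre. -/
def club (t w : V) (U : Submodule F K) : Submodule F V :=
  F ∙ w ⊔ U.map ((LinearMap.toSpanSingleton K V t).restrictScalars F)

lemma mem_club {t w v : V} {U : Submodule F K} :
    v ∈ club t w U ↔ ∃ x : F, ∃ u ∈ U, x • w + u • t = v := by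
  simp [club, mem_sup, mem_span_singleton]

lemma smul_club (k : K) (t w : V) (U : Submodule F K) :
    k • club t w U = club (k • t) (k • w) U := by
  ext v
  simp only [mem_smul_pointwise_iff_exists, mem_club]
  constructor
  · rintro ⟨_, ⟨x, u, hu, rfl⟩, rfl⟩
    exact ⟨x, u, hu, by rw [smul_add, smul_comm k x, smul_comm k u]⟩
  · rintro ⟨x, u, hu, rfl⟩
    exact ⟨_, ⟨x, u, hu, rfl⟩, by rw [smul_add, smul_comm k x, smul_comm k u]⟩

lemma club_smul_left (k : K) (t w : V) (U : Submodule F K) :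
    club (k • t) w U = club t w (k • U) := by
  ext v
  simp only [mem_club, mem_smul_pointwise_iff_exists]
  constructor
  · rintro ⟨x, u, hu, rfl⟩
    exact ⟨x, _, ⟨u, hu, rfl⟩, by rw [smul_assoc, smul_comm]⟩
  · rintro ⟨x, _, ⟨u, hu, rfl⟩, rfl⟩
    exact ⟨x, u, hu, by rw [smul_assoc, smul_comm]⟩

lemma club_add_smul {u₀ : K} {U : Submodule F K} (hu₀ : u₀ ∈ U) (t w : V) :
    club t (w + u₀ • t) U = club t w U := by
  ext v
  simp only [mem_club]
  constructor
  · rintro ⟨x, u, hu, rfl⟩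
    exact ⟨x, x • u₀ + u, add_mem (U.smul_mem x hu₀) hu, by
      rw [add_smul, smul_assoc, smul_add, add_assoc]⟩
  · rintro ⟨x, u, hu, rfl⟩
    exact ⟨x, u - x • u₀, sub_mem hu (U.smul_mem x hu₀), by
      rw [sub_smul, smul_assoc, smul_add, add_assoc, add_sub_cancel]⟩

lemma exists_smul_add_smul_eq_of_mk_mem_points_club {t w v : V} {U : Submodule F K} {hv : v ≠ 0}
    (hmem : mk K v hv ∈ points K (club t w U)) (hvt : ∀ k : K, k • t ≠ v) :
    ∃ s : K, s ≠ 0 ∧ ∃ u ∈ U, s • (w + u • t) = v := by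
  obtain ⟨c, hc, hcv⟩ := (mk_mem_points_iff hv).1 hmem
  obtain ⟨x, u, hu, hxu⟩ := mem_club.1 hcv
  have hx : x ≠ 0 := by
    rintro rfl
    rw [zero_smul, zero_add, ← inv_smul_eq_iff₀ hc, smul_smul] at hxu
    exact hvt _ hxu
  refine ⟨c⁻¹ * algebraMap F K x, by simp [hc, hx], x⁻¹ • u, U.smul_mem _ hu, ?_⟩
  rw [mul_smul, inv_smul_eq_iff₀ hc, ← hxu, algebraMap_smul, smul_add, smul_assoc,
    smul_inv_smul₀ hx]

lemma mk_mem_points_club_iff {t w v : V} (htw : LinearIndependent K ![t, w]) {s k : K} (hs : s ≠ 0)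
    {U : Submodule F K} (hv : v ≠ 0) (hskv : s • (w + k • t) = v) :
    mk K v hv ∈ points K (club t w U) ↔ k ∈ U := by
  rw [mk_mem_points_iff]
  subst hskv
  constructor
  · rintro ⟨c, hc, hmem⟩
    obtain ⟨x, u, hu, hxu⟩ := mem_club.1 hmem
    obtain ⟨hu', hx⟩ := LinearIndependent.pair_iff.1 htw (u - c * s * k) (algebraMap F K x - c * s)
      (by rw [sub_smul, sub_smul, algebraMap_smul, sub_add_sub_comm, add_comm (u • t), hxu]; module)
    have hx0 : x ≠ 0 := by
      rintro rfl
      simp [hc, hs] at hx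
    have hk : k = x⁻¹ • u := by
      rw [eq_inv_smul_iff₀ hx0, Algebra.smul_def, sub_eq_zero.1 hx, sub_eq_zero.1 hu']
    exact hk ▸ U.smul_mem _ hu
  · intro hk
    exact ⟨s⁻¹, inv_ne_zero hs, mem_club.2 ⟨1, k, hk, by rw [inv_smul_smul₀ hs, one_smul]⟩⟩

lemma add_smul_ne_zero {t w : V} (htw : LinearIndependent K ![t, w]) (k : K) : w + k • t ≠ 0 := by
  intro h
  simpa using (LinearIndependent.pair_iff.1 htw k 1 (by rw [one_smul, add_comm, h])).2

lemma mk_left_mem_points_club {t w : V} (ht : t ≠ 0) {U : Submodule F K} (hU : U ≠ ⊥) :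
    mk K t ht ∈ points K (club t w U) := by
  obtain ⟨u, hu, hu0⟩ := exists_mem_ne_zero_of_ne_bot hU
  exact (mk_mem_points_iff ht).2 ⟨u, hu0, mem_club.2 ⟨0, u, hu, by simp⟩⟩

lemma smul_add_smul_eq_add_smul {t t' w : V} {s s' u u₀ u₀' : K} (hs : s ≠ 0) (hs' : s' ≠ 0)
    (hu : u ≠ 0) (ht' : s • (w + u₀ • t) = t') (ht : s' • (w + u₀' • t') = t) :
    (u * s') • (w + ((s * s')⁻¹ / u + u₀') • t') = w + (u₀ + u) • t := by
  have hw : w + u₀ • t = s⁻¹ • t' := by rw [← ht', inv_smul_smul₀ hs]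
  calc (u * s') • (w + ((s * s')⁻¹ / u + u₀') • t')
      = (u * s' * ((s * s')⁻¹ / u)) • t' + u • s' • (w + u₀' • t') := by module
    _ = s⁻¹ • t' + u • t := by rw [ht]; congr 2; field_simp
    _ = w + (u₀ + u) • t := by rw [← hw]; module

lemma exists_smul_eq_of_points_club_eq (hodd : Odd (finrank F K)) {a b : K}
    (hab : LinearIndependent F ![a, b]) {t t' w : V} (htw : LinearIndependent K ![t, w])
    (htw' : LinearIndependent K ![t', w])
    (h : points K (club t w (span F {a, b})) = points K (club t' w (span F {a, b}))) :
    ∃ k : K, k • t = t' := by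
  by_contra! hne
  have ht : t ≠ 0 := htw.ne_zero 0
  have ht' : t' ≠ 0 := htw'.ne_zero 0
  have hne' (k : K) : k • t' ≠ t := by
    rintro rfl
    exact hne k⁻¹ (inv_smul_smul₀ (smul_ne_zero_iff.1 ht).1 t')
  have hU : span F {a, b} ≠ ⊥ := fun h ↦ hab.ne_zero 0 (span_eq_bot.1 h a (by simp))
  have hmem' : mk K t' ht' ∈ points K (club t w (span F {a, b})) :=
    h.symm.subset (mk_left_mem_points_club ht' hU)
  have hmem : mk K t ht ∈ points K (club t' w (span F {a, b})) :=
    h.subset (mk_left_mem_points_club ht hU)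
  obtain ⟨s, hs, u₀, hu₀, hst'⟩ := exists_smul_add_smul_eq_of_mk_mem_points_club hmem' hne
  obtain ⟨s', hs', u₀', hu₀', hst⟩ := exists_smul_add_smul_eq_of_mk_mem_points_club hmem hne'
  -- In these coordinates the passage from one club to the other is the inversion `u ↦ c / u`,
  -- with `c = (s * s')⁻¹`.
  obtain ⟨u, hu, hu0, hdiv⟩ := exists_div_notMem_span_pair hodd hab
    (inv_ne_zero (mul_ne_zero hs hs'))
  have hpt : mk K (w + (u₀ + u) • t) (add_smul_ne_zero htw _) ∈
      points K (club t w (span F {a, b})) :=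
    (mk_mem_points_club_iff htw one_ne_zero _ (one_smul K _)).2 (add_mem hu₀ hu)
  rw [h, mk_mem_points_club_iff htw' (mul_ne_zero hu0 hs') _
    (smul_add_smul_eq_add_smul hs hs' hu0 hst' hst), add_mem_cancel_right hu₀'] at hpt
  exact hdiv hpt

lemma mem_range_algebraMap_of_points_club_eq (hodd : Odd (finrank F K)) {a b k : K}
    (hab : LinearIndependent F ![a, b]) {t w : V} (htw : LinearIndependent K ![t, w])
    (htw' : LinearIndependent K ![k • t, w])
    (h : points K (club t w (span F {a, b})) = points K (club (k • t) w (span F {a, b}))) :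
    k ∈ (algebraMap F K).range := by
  refine mem_range_algebraMap_of_forall_mul_mem hodd hab fun u hu ↦ ?_
  have hpt : mk K (w + u • k • t) (add_smul_ne_zero htw' u) ∈
      points K (club (k • t) w (span F {a, b})) :=
    (mk_mem_points_club_iff htw' one_ne_zero _ (one_smul K _)).2 hu
  rwa [← h, mk_mem_points_club_iff htw one_ne_zero _ (by rw [one_smul, mul_smul, smul_comm k])]
    at hpt

end PointSets

section Lattices

variable {F K V : Type*} [Field F] [Field K] [Algebra F K] [AddCommGroup V] [Module K V]

lemma exists_linearIndependent_cons {m n : ℕ} (hmn : m < n) {e : Fin n → V}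
    (he : LinearIndependent K e) {v : Fin m → V} (hv : LinearIndependent K v) :
    ∃ i, LinearIndependent K (Fin.cons (e i) v : Fin (m + 1) → V) := by
  by_contra! h
  have hle : span K (Set.range e) ≤ span K (Set.range v) := by
    rw [span_le, Set.range_subset_iff]
    intro i
    by_contra hi
    exact h i (linearIndependent_finCons.2 ⟨hv, hi⟩)
  have := FiniteDimensional.span_of_finite K (Set.finite_range v)
  have := finrank_mono hle
  rw [finrank_span_eq_card he, finrank_span_eq_card hv, Fintype.card_fin, Fintype.card_fin] at this
  lia

variable [Module F V] [IsScalarTower F K V]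

lemma span_range_eq_of_forall_mem {ι : Type*} [Finite ι] {e e' : ι → V}
    (he' : LinearIndependent K e') (h : ∀ i, e' i ∈ span F (Set.range e)) :
    span F (Set.range e') = span F (Set.range e) := by
  cases nonempty_fintype ι
  have := FiniteDimensional.span_of_finite F (Set.finite_range e)
  refine eq_of_le_of_finrank_le (span_le.2 (Set.range_subset_iff.2 h)) ?_
  rw [finrank_span_eq_card (he'.restrict_scalars' F)]
  exact finrank_range_le_card e

lemma range_vecCons_triple {α : Type*} (x y z : α) : Set.range ![x, y, z] = {x, y, z} := by
  rw [Matrix.range_cons, Matrix.range_cons_cons_empty, Set.singleton_union]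

lemma span_triple_eq_of_mem {e : Fin 3 → V} {x y z : V} (h : LinearIndependent K ![x, y, z])
    (hx : x ∈ span F (Set.range e)) (hy : y ∈ span F (Set.range e))
    (hz : z ∈ span F (Set.range e)) : span F {x, y, z} = span F (Set.range e) := by
  rw [← range_vecCons_triple]
  exact span_range_eq_of_forall_mem h (by simp [Fin.forall_fin_succ, hx, hy, hz])

lemma mem_span_range_of_mem_span_range {n : ℕ} {e : Fin (n + 1) → V} (he : LinearIndependent K e)
    {v : Fin n → V} (hv : LinearIndependent K v) (hve : ∀ i, v i ∈ span F (Set.range e)) {x : V}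
    (hx : x ∈ span F (Set.range e)) (hxv : x ∈ span K (Set.range v)) :
    x ∈ span F (Set.range v) := by
  obtain ⟨i, hi⟩ := exists_linearIndependent_cons n.lt_succ_self he hv
  rw [← span_range_eq_of_forall_mem hi (Fin.cases (subset_span ⟨i, rfl⟩) hve), Fin.range_cons,
    mem_span_insert] at hx
  obtain ⟨z, y, hy, rfl⟩ := hx
  have hzi : algebraMap F K z • e i ∈ span K (Set.range v) := by
    rw [algebraMap_smul]
    exact (Submodule.add_mem_iff_left _ (span_le_restrictScalars F K _ hy)).1 hxv
  have hz : z = 0 := by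
    by_contra hz
    exact (linearIndependent_finCons.1 hi).2 ((smul_mem_iff _ (by simpa using hz)).1 hzi)
  simpa [hz] using hy

lemma mem_span_pair_of_mem_span_range {e : Fin 3 → V} (he : LinearIndependent K e) {a c x : V}
    (hac : LinearIndependent K ![a, c]) (ha : a ∈ span F (Set.range e))
    (hc : c ∈ span F (Set.range e)) (hx : x ∈ span F (Set.range e)) (hxac : x ∈ span K {a, c}) :
    x ∈ span F {a, c} := by
  rw [← Matrix.range_cons_cons_empty a c ![]] at hxac ⊢
  exact mem_span_range_of_mem_span_range he hac (by simp [Fin.forall_fin_two, ha, hc]) hx hxac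

end Lattices

section Plane

variable {F K : Type*} [Field F] [Field K] [Algebra F K]

lemma mk_mem_linf_iff {v : Fin 3 → K} (hv : v ≠ 0) : mk K v hv ∈ linf K ↔ v 2 = 0 := by
  obtain ⟨a, ha⟩ := exists_smul_eq_mk_rep K v hv
  simp [linf, ← ha, Units.smul_def]

lemma finrank_span_pair {V : Type*} [AddCommGroup V] [Module K V] {p r : V}
    (hpr : LinearIndependent K ![p, r]) : finrank K (span K {p, r}) = 2 := by
  rw [← Matrix.range_cons_cons_empty p r ![], finrank_span_eq_card hpr, Fintype.card_fin]

lemma eq_span_pair_of_mem {V : Type*} [AddCommGroup V] [Module K V] {p r : V}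
    (hpr : LinearIndependent K ![p, r]) {W : Submodule K V} (hW : finrank K W = 2) (hp : p ∈ W)
    (hr : r ∈ W) : W = span K {p, r} := by
  have : FiniteDimensional K W := .of_finrank_pos (by lia)
  refine (eq_of_le_of_finrank_eq (span_le.2 (Set.pair_subset hp hr)) ?_).symm
  rw [hW, finrank_span_pair hpr]

lemma basePlane_eq_points :
    basePlane F K = points K (span F (Set.range (Pi.basisFun K (Fin 3)))) := by
  ext P
  simp only [basePlane, points, Set.mem_ofPred_eq, Basis.mem_span_iff_repr_mem, Pi.basisFun_repr,
    exists_and_right, and_comm, RingHom.mem_range, Set.mem_range]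

lemma hmap_image_points (f : (Fin 3 → K) ≃ₗ[K] (Fin 3 → K)) (M : Submodule F (Fin 3 → K)) :
    hmap f '' points K M = points K (M.map (f.toLinearMap.restrictScalars F)) := by
  ext P
  constructor
  · rintro ⟨_, ⟨v, hv, hv0, rfl⟩, rfl⟩
    exact ⟨f v, mem_map_of_mem hv, f.map_ne_zero_iff.2 hv0, rfl⟩
  · rintro ⟨_, ⟨v, hv, rfl⟩, hv0, rfl⟩
    exact ⟨mk K v (f.map_ne_zero_iff.1 hv0), ⟨v, hv, _, rfl⟩, rfl⟩

lemma isSubplane_iff {S : Set (PGPoint K)} :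
    IsSubplane F S ↔ ∃ e : Fin 3 → Fin 3 → K, LinearIndependent K e ∧
      S = points K (span F (Set.range e)) := by
  simp only [IsSubplane, basePlane_eq_points, hmap_image_points, map_span, ← Set.range_comp]
  constructor
  · rintro ⟨f, rfl⟩
    exact ⟨_, ((Pi.basisFun K (Fin 3)).map f).linearIndependent, by simp; rfl⟩
  · rintro ⟨e, he, rfl⟩
    let B := basisOfLinearIndependentOfCardEqFinrank he (by simp)
    exact ⟨(Pi.basisFun K (Fin 3)).equiv B (Equiv.refl _), by
      congr 3
      exact funext fun i ↦ by simp [-Pi.basisFun_apply, B]⟩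

lemma isSubplane_points_span {a b c : Fin 3 → K} (h : LinearIndependent K ![a, b, c]) :
    IsSubplane F (points K (span F {a, b, c})) :=
  isSubplane_iff.2 ⟨_, h, by rw [range_vecCons_triple]⟩

lemma mk_mem_splash_points_iff {M : Submodule F (Fin 3 → K)} {v : Fin 3 → K} (hv : v ≠ 0) :
    mk K v hv ∈ splash (points K M) ↔
      v 2 = 0 ∧ ∃ p ∈ M, ∃ r ∈ M, LinearIndependent K ![p, r] ∧ v ∈ span K {p, r} := by
  rw [splash, Set.mem_ofPred_eq, mk_mem_linf_iff]
  refine and_congr_right fun _ ↦ ?_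
  constructor
  · rintro ⟨_, _, ⟨p, hp, hp0, rfl⟩, ⟨r, hr, hr0, rfl⟩, hne, _, ⟨W, hW, rfl⟩, hpW, hrW, hvW⟩
    simp only [Set.mem_ofPred_eq, submodule_mk, span_singleton_le_iff_mem] at hpW hrW hvW
    have hpr := (mk_ne_mk_iff hp0 hr0).1 hne
    exact ⟨p, hp, r, hr, hpr, eq_span_pair_of_mem hpr hW hpW hrW ▸ hvW⟩
  · rintro ⟨p, hp, r, hr, hpr, hvpr⟩
    have hp0 : p ≠ 0 := hpr.ne_zero 0
    have hr0 : r ≠ 0 := hpr.ne_zero 1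
    refine ⟨mk K p hp0, mk K r hr0, ⟨p, hp, hp0, rfl⟩, ⟨r, hr, hr0, rfl⟩,
      (mk_ne_mk_iff hp0 hr0).2 hpr, _, ⟨span K {p, r}, finrank_span_pair hpr, rfl⟩, ?_⟩
    simp only [Set.mem_ofPred_eq, submodule_mk, span_singleton_le_iff_mem]
    exact ⟨subset_span (by simp), subset_span (by simp), hvpr⟩

end Plane

section TangentFrame

variable {F K : Type*} [Field F] [Field K] [Algebra F K] {t a c : Fin 3 → K}

/-- A homogeneous coordinate vector of the point in which the line joining `⟨p⟩` and `⟨r⟩` meets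
`ℓ∞`; it is zero if `⟨p⟩` and `⟨r⟩` are equal or both lie on `ℓ∞`. -/
def meetInf (p r : Fin 3 → K) : Fin 3 → K := r 2 • p - p 2 • r

lemma meetInf_apply_two (p r : Fin 3 → K) : meetInf p r 2 = 0 := by
  simp [meetInf, mul_comm]

lemma meetInf_mem_span_pair (p r : Fin 3 → K) : meetInf p r ∈ span K {p, r} :=
  sub_mem (smul_mem _ _ (subset_span (by simp))) (smul_mem _ _ (subset_span (by simp)))

lemma meetInf_ne_zero {p r : Fin 3 → K} (hpr : LinearIndependent K ![p, r]) (hr : r 2 ≠ 0) :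
    meetInf p r ≠ 0 := fun h ↦
  hr (LinearIndependent.pair_iff.1 hpr (r 2) (-p 2) (by rw [neg_smul, ← sub_eq_add_neg]; exact h)).1

lemma exists_smul_meetInf_eq {p r v : Fin 3 → K} (hpr : p 2 ≠ 0 ∨ r 2 ≠ 0)
    (hv : v ∈ span K {p, r}) (hv2 : v 2 = 0) : ∃ k : K, k • meetInf p r = v := by
  obtain ⟨x, y, rfl⟩ := mem_span_pair.1 hv
  have hxy : x * p 2 + y * r 2 = 0 := by simpa using hv2
  rcases hpr with hp | hr
  · have hx : x = -y / p 2 * r 2 := by field_simp; linear_combination hxy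
    have hy : y = -y / p 2 * -p 2 := by field_simp
    exact ⟨-y / p 2, by rw [meetInf, sub_eq_add_neg, ← neg_smul, smul_add, smul_smul, smul_smul,
      ← hx, ← hy]⟩
  · have hx : x = x / r 2 * r 2 := by field_simp
    have hy : y = x / r 2 * -p 2 := by field_simp; linear_combination hxy
    exact ⟨x / r 2, by rw [meetInf, sub_eq_add_neg, ← neg_smul, smul_add, smul_smul, smul_smul,
      ← hx, ← hy]⟩

lemma linearIndependent_of_meetInf_ne_zero {p r : Fin 3 → K} (h : meetInf p r ≠ 0) :
    LinearIndependent K ![p, r] := by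
  have hp : p ≠ 0 := by
    rintro rfl
    simp [meetInf] at h
  refine (LinearIndependent.pair_iff' hp).2 ?_
  rintro k rfl
  exact h (by rw [meetInf, Pi.smul_apply, smul_assoc, smul_comm, sub_self])

lemma linearIndependent_triple_iff :
    LinearIndependent K ![t, a, c] ↔ LinearIndependent K ![a, c] ∧ t ∉ span K {a, c} := by
  rw [← Matrix.range_cons_cons_empty a c ![]]
  exact linearIndependent_finCons

lemma mem_span_of_mk_mem_points_span {s : Set (Fin 3 → K)} {v : Fin 3 → K} {hv : v ≠ 0}
    (h : mk K v hv ∈ points K (span F s)) : v ∈ span K s := by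
  obtain ⟨k, hk, hkv⟩ := (mk_mem_points_iff hv).1 h
  exact (smul_mem_iff _ hk).1 (span_le_restrictScalars F K s hkv)

lemma linearIndependent_apply_two_iff (hac : LinearIndependent K ![a, c]) :
    LinearIndependent F ![a 2, c 2] ↔ points K (span F {a, c}) ∩ linf K = ∅ := by
  constructor
  · rintro h
    rw [Set.eq_empty_iff_forall_notMem]
    rintro _ ⟨⟨v, hv, hv0, rfl⟩, hv2⟩
    rw [mk_mem_linf_iff] at hv2
    obtain ⟨x, y, rfl⟩ := mem_span_pair.1 hv
    obtain ⟨rfl, rfl⟩ := LinearIndependent.pair_iff.1 h x y hv2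
    simp at hv0
  · intro h
    refine LinearIndependent.pair_iff.2 fun x y hxy ↦ ?_
    by_contra hne
    have hv : x • a + y • c ≠ 0 :=
      mt (LinearIndependent.pair_iff.1 (hac.restrict_scalars' F) x y) hne
    exact h.subset ⟨⟨_, mem_span_pair.2 ⟨x, y, rfl⟩, hv, rfl⟩, (mk_mem_linf_iff hv).2 hxy⟩

variable (F t a c) in
/-- A tangent frame presents an order-`q`-subplane tangent to `ℓ∞`: the `F`-span of `t, a, c`
coordinatises a subplane, `⟨t⟩` is a point of `ℓ∞`, and the `F`-independence of the last coordinates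
of `a` and `c` says that the subline `⟨a, c⟩` is disjoint from `ℓ∞`. -/
structure TangentFrame : Prop where
  linearIndependent : LinearIndependent K ![t, a, c]
  apply_two_eq_zero : t 2 = 0
  linearIndependent_apply_two : LinearIndependent F ![a 2, c 2]

namespace TangentFrame

lemma left_ne_zero (h : TangentFrame F t a c) : t ≠ 0 := h.linearIndependent.ne_zero 0

lemma isSubplane (h : TangentFrame F t a c) : IsSubplane F (points K (span F {t, a, c})) :=
  isSubplane_points_span h.linearIndependent

lemma points_inter_linf (h : TangentFrame F t a c) :
    points K (span F {t, a, c}) ∩ linf K = {Projectivization.mk K t h.left_ne_zero} := by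
  ext P
  rw [Set.mem_singleton_iff]
  constructor
  · rintro ⟨⟨v, hv, hv0, rfl⟩, hv2⟩
    obtain ⟨z, x, y, rfl⟩ := mem_span_triple.1 hv
    obtain ⟨rfl, rfl⟩ := LinearIndependent.pair_iff.1 h.linearIndependent_apply_two x y
      (by simpa [h.apply_two_eq_zero] using (mk_mem_linf_iff hv0).1 hv2)
    exact (mk_eq_mk_iff' K _ _ _ _).2 ⟨algebraMap F K z, by simp⟩
  · rintro rfl
    exact ⟨⟨t, subset_span (by simp), _, rfl⟩, (mk_mem_linf_iff _).2 h.apply_two_eq_zero⟩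

lemma of_points_inter_linf (h : LinearIndependent K ![t, a, c])
    (hT : points K (span F {t, a, c}) ∩ linf K = {Projectivization.mk K t (h.ne_zero 0)}) :
    TangentFrame F t a c := by
  obtain ⟨hac, htac⟩ := linearIndependent_triple_iff.1 h
  refine ⟨h, (mk_mem_linf_iff _).1 (hT.symm.subset rfl).2,
    (linearIndependent_apply_two_iff hac).2 ?_⟩
  rw [Set.eq_empty_iff_forall_notMem]
  rintro P ⟨hP, hPinf⟩
  obtain rfl := hT.subset ⟨points_mono (span_mono (by simp)) hP, hPinf⟩
  exact htac (mem_span_of_mk_mem_points_span hP)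

lemma linearIndependent_meetInf (h : TangentFrame F t a c) :
    LinearIndependent K ![t, meetInf a c] := by
  obtain ⟨hac, htac⟩ := linearIndependent_triple_iff.1 h.linearIndependent
  have hc : c 2 ≠ 0 := h.linearIndependent_apply_two.ne_zero 1
  rw [LinearIndependent.pair_symm_iff, LinearIndependent.pair_iff' (meetInf_ne_zero hac hc)]
  rintro k rfl
  exact htac (smul_mem _ _ (meetInf_mem_span_pair a c))

lemma meetInf_mem_club (h : TangentFrame F t a c) {p r : Fin 3 → K}
    (hp : p ∈ span F {t, a, c}) (hr : r ∈ span F {t, a, c}) :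
    meetInf p r ∈ club t (meetInf a c) (span F {a 2, c 2}) := by
  obtain ⟨z, x, y, rfl⟩ := mem_span_triple.1 hp
  obtain ⟨z', x', y', rfl⟩ := mem_span_triple.1 hr
  refine mem_club.2 ⟨x * y' - y * x', z • (x' • a 2 + y' • c 2) - z' • (x • a 2 + y • c 2),
    sub_mem (smul_mem _ _ (mem_span_pair.2 ⟨x', y', rfl⟩))
      (smul_mem _ _ (mem_span_pair.2 ⟨x, y, rfl⟩)), ?_⟩
  simp only [meetInf, Pi.add_apply, Pi.smul_apply, h.apply_two_eq_zero, smul_zero, zero_add]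
  match_scalars <;> (simp only [Algebra.smul_def]; ring)

lemma exists_meetInf_eq (h : TangentFrame F t a c) {u : K} (hu : u ∈ span F {a 2, c 2}) :
    ∃ p ∈ span F {t, a, c}, ∃ r ∈ span F {t, a, c}, meetInf p r = meetInf a c + u • t := by
  obtain ⟨x, y, rfl⟩ := mem_span_pair.1 hu
  have ht : t ∈ span F {t, a, c} := subset_span (by simp)
  refine ⟨a + y • t, add_mem (subset_span (by simp)) (smul_mem _ _ ht),
    c - x • t, sub_mem (subset_span (by simp)) (smul_mem _ _ ht), ?_⟩
  simp only [meetInf, Pi.add_apply, Pi.sub_apply, Pi.smul_apply, h.apply_two_eq_zero,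
    smul_zero, add_zero, sub_zero]
  match_scalars <;> simp [Algebra.smul_def, add_comm, mul_comm]

lemma splash_subset_points_club (h : TangentFrame F t a c) :
    splash (points K (span F {t, a, c})) ⊆
      points K (club t (meetInf a c) (span F {a 2, c 2})) := by
  intro P hP
  induction P using Projectivization.ind with | h v hv
  obtain ⟨hv2, p, hp, r, hr, hpr, hvpr⟩ := (mk_mem_splash_points_iff hv).1 hP
  have hheight : p 2 ≠ 0 ∨ r 2 ≠ 0 := by
    by_contra! h0
    refine (mk_ne_mk_iff (hpr.ne_zero 0) (hpr.ne_zero 1)).2 hpr ?_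
    have hmk {v : Fin 3 → K} (hv : v ∈ span F {t, a, c}) (hv0 : v ≠ 0) (hv2 : v 2 = 0) :
        Projectivization.mk K v hv0 = Projectivization.mk K t h.left_ne_zero :=
      h.points_inter_linf.subset ⟨⟨v, hv, hv0, rfl⟩, (mk_mem_linf_iff hv0).2 hv2⟩
    exact (hmk hp _ h0.1).trans (hmk hr _ h0.2).symm
  obtain ⟨k, rfl⟩ := exists_smul_meetInf_eq hheight hvpr hv2
  have hk : k ≠ 0 := (smul_ne_zero_iff.1 hv).1
  exact (mk_mem_points_iff hv).2
    ⟨k⁻¹, inv_ne_zero hk, by rw [inv_smul_smul₀ hk]; exact h.meetInf_mem_club hp hr⟩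

lemma points_club_subset_splash (h : TangentFrame F t a c) :
    points K (club t (meetInf a c) (span F {a 2, c 2})) ⊆
      splash (points K (span F {t, a, c})) := by
  intro P hP
  induction P using Projectivization.ind with | h v hv
  rw [mk_mem_splash_points_iff]
  by_cases hvt : ∃ k : K, k • t = v
  · obtain ⟨k, rfl⟩ := hvt
    have hta : LinearIndependent K ![t, a] := by
      have hcomp : ![t, a, c] ∘ ![0, 1] = ![t, a] := funext (by simp [Fin.forall_fin_two])
      exact hcomp ▸ h.linearIndependent.comp ![0, 1] (by decide)
    exact ⟨by simp [h.apply_two_eq_zero], t, subset_span (by simp), a, subset_span (by simp),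
      hta, smul_mem _ k (subset_span (by simp))⟩
  · obtain ⟨s, -, u, hu, rfl⟩ := exists_smul_add_smul_eq_of_mk_mem_points_club hP
      (not_exists.1 hvt)
    obtain ⟨p, hp, r, hr, hpr⟩ := h.exists_meetInf_eq hu
    rw [← hpr] at hv ⊢
    exact ⟨by simp [meetInf_apply_two], p, hp, r, hr,
      linearIndependent_of_meetInf_ne_zero (smul_ne_zero_iff.1 hv).2,
      smul_mem _ s (meetInf_mem_span_pair p r)⟩

lemma splash_eq (h : TangentFrame F t a c) :
    splash (points K (span F {t, a, c})) =
      points K (club t (meetInf a c) (span F {a 2, c 2})) :=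
  h.splash_subset_points_club.antisymm h.points_club_subset_splash

end TangentFrame

end TangentFrame

section SublinesAndTangentSubplanes

variable {F K : Type*} [Field F] [Field K] [Algebra F K] {a c : Fin 3 → K}

lemma exists_tangentFrame {π : Set (PGPoint K)} {T : PGPoint K} (hπ : IsSubplane F π)
    (hT : π ∩ linf K = {T}) :
    ∃ t a c, TangentFrame F t a c ∧ π = points K (span F {t, a, c}) := by
  obtain ⟨e, he, rfl⟩ := isSubplane_iff.1 hπ
  obtain ⟨t, ht, ht0, rfl⟩ : T ∈ points K (span F (Set.range e)) := (hT.symm.subset rfl).1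
  obtain ⟨i, hi⟩ := exists_linearIndependent_cons (m := 1) (by decide) he
    (v := ![t]) (by simpa using ht0)
  obtain ⟨j, hj⟩ := exists_linearIndependent_cons (by decide) he hi
  have hperm : LinearIndependent K ![t, e i, e j] := by
    have hcomp : ![e j, e i, t] ∘ ![2, 1, 0] = ![t, e i, e j] :=
      funext (by simp [Fin.forall_fin_succ])
    exact hcomp ▸ hj.comp ![2, 1, 0] (by decide)
  have hspan := span_triple_eq_of_mem hperm ht (subset_span ⟨i, rfl⟩) (subset_span ⟨j, rfl⟩)
  exact ⟨_, _, _, .of_points_inter_linf hperm (hspan ▸ hT), by rw [hspan]⟩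

lemma exists_smul_mem_of_points_span_pair_subset {e : Fin 3 → Fin 3 → K}
    (he : LinearIndependent K e) (hac : LinearIndependent K ![a, c])
    (hsub : points K (span F {a, c}) ⊆ points K (span F (Set.range e))) :
    ∃ g : K, g ≠ 0 ∧ g • a ∈ span F (Set.range e) ∧ g • c ∈ span F (Set.range e) := by
  have hmem {v : Fin 3 → K} (hv : v ∈ span F {a, c}) (hv0 : v ≠ 0) :
      ∃ k : K, k ≠ 0 ∧ k • v ∈ span F (Set.range e) :=
    (mk_mem_points_iff hv0).1 (hsub ⟨v, hv, hv0, rfl⟩)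
  have ha : a ∈ span F {a, c} := subset_span (by simp)
  have hc : c ∈ span F {a, c} := subset_span (by simp)
  have hsum : a + c ≠ 0 := fun h ↦ by
    simpa using (LinearIndependent.pair_iff.1 hac 1 1 (by simpa using h)).1
  obtain ⟨α, hα, hαa⟩ := hmem ha (hac.ne_zero 0)
  obtain ⟨β, hβ, hβc⟩ := hmem hc (hac.ne_zero 1)
  obtain ⟨g, hg, hgac⟩ := hmem (add_mem ha hc) hsum
  have hαβ : LinearIndependent K ![α • a, β • c] := LinearIndependent.pair_iff.2 fun x y hxy ↦ by
    simpa [hα, hβ] using LinearIndependent.pair_iff.1 hac (x * α) (y * β)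
      (by rw [mul_smul, mul_smul, hxy])
  have hgspan : g • (a + c) ∈ span F {α • a, β • c} := by
    refine mem_span_pair_of_mem_span_range he hαβ hαa hβc hgac ?_
    rw [smul_add]
    exact mem_span_pair.2 ⟨g / α, g / β, by simp [smul_smul, hα, hβ]⟩
  obtain ⟨x, y, hxy⟩ := mem_span_pair.1 hgspan
  obtain ⟨hx, hy⟩ := LinearIndependent.pair_iff.1 hac (algebraMap F K x * α - g)
    (algebraMap F K y * β - g) (by
      rw [sub_smul, sub_smul, sub_add_sub_comm, ← smul_add, sub_eq_zero, ← hxy]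
      simp only [mul_smul, algebraMap_smul])
  refine ⟨g, hg, ?_, ?_⟩
  · rw [← sub_eq_zero.1 hx, mul_smul, algebraMap_smul]
    exact smul_mem _ _ hαa
  · rw [← sub_eq_zero.1 hy, mul_smul, algebraMap_smul]
    exact smul_mem _ _ hβc

lemma exists_points_span_range_eq_of_points_span_pair_subset {π : Set (PGPoint K)}
    (hπ : IsSubplane F π) (hac : LinearIndependent K ![a, c])
    (hsub : points K (span F {a, c}) ⊆ π) :
    ∃ e : Fin 3 → Fin 3 → K, LinearIndependent K e ∧ π = points K (span F (Set.range e)) ∧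
      a ∈ span F (Set.range e) ∧ c ∈ span F (Set.range e) := by
  obtain ⟨e, he, rfl⟩ := isSubplane_iff.1 hπ
  obtain ⟨g, hg, hga, hgc⟩ := exists_smul_mem_of_points_span_pair_subset he hac hsub
  have hspan : g⁻¹ • span F (Set.range e) = span F (Set.range fun i ↦ g⁻¹ • e i) := by
    rw [smul_span, Set.smul_set_range]
  refine ⟨fun i ↦ g⁻¹ • e i, he.units_smul fun _ ↦ Units.mk0 g⁻¹ (inv_ne_zero hg), ?_, ?_, ?_⟩
  · rw [← hspan, points_smul (inv_ne_zero hg)]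
  · rw [← hspan, ← inv_smul_smul₀ hg a]
    exact smul_mem_pointwise_smul _ _ _ hga
  · rw [← hspan, ← inv_smul_smul₀ hg c]
    exact smul_mem_pointwise_smul _ _ _ hgc

lemma exists_tangentFrame_of_points_span_pair_subset {π : Set (PGPoint K)} {T : PGPoint K}
    (hπ : IsSubplane F π) (hT : π ∩ linf K = {T}) (hac : LinearIndependent K ![a, c])
    (hsub : points K (span F {a, c}) ⊆ π) (hdisj : points K (span F {a, c}) ∩ linf K = ∅) :
    ∃ t, TangentFrame F t a c ∧ π = points K (span F {t, a, c}) := by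
  obtain ⟨e, he, rfl, ha, hc⟩ := exists_points_span_range_eq_of_points_span_pair_subset hπ hac hsub
  have hTmem : T ∈ points K (span F (Set.range e)) ∩ linf K := hT.symm.subset rfl
  obtain ⟨⟨t, ht, ht0, rfl⟩, htinf⟩ := hTmem
  have htac : t ∉ span K {a, c} := by
    intro h
    exact hdisj.subset ⟨⟨t, mem_span_pair_of_mem_span_range he hac ha hc ht h, ht0, rfl⟩, htinf⟩
  have h := linearIndependent_triple_iff.2 ⟨hac, htac⟩
  have hspan := span_triple_eq_of_mem h ht ha hc
  exact ⟨t, .of_points_inter_linf h (hspan ▸ hT), by rw [hspan]⟩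

variable (F) in
/-- An order-`q`-subline of `PG(2,K)`, described without counting: the intersection of an
order-`q`-subplane with a line of `PG(2,K)` joining two of its points. -/
def IsSublineOver (b : Set (PGPoint K)) : Prop :=
  ∃ S ℓ : Set (PGPoint K), IsSubplane F S ∧ IsLine ℓ ∧ (S ∩ ℓ).Nontrivial ∧ b = S ∩ ℓ

lemma IsSubline.isSublineOver {q : ℕ} (hq : q ≠ 0) {b : Set (PGPoint K)} (hb : IsSubline F q b) :
    IsSublineOver F b := by
  obtain ⟨S, ℓ, hS, hℓ, hcard, rfl⟩ := hb
  exact ⟨S, ℓ, hS, hℓ, (Set.one_lt_ncard_iff_nontrivial_and_finite.1 (by lia)).1, rfl⟩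

lemma IsSublineOver.exists_eq_points {b : Set (PGPoint K)} (hb : IsSublineOver F b) :
    ∃ a c, LinearIndependent K ![a, c] ∧ b = points K (span F {a, c}) := by
  obtain ⟨S, _, hS, ⟨W, hW, rfl⟩, ⟨P, ⟨hPS, hPW⟩, Q, ⟨hQS, hQW⟩, hPQ⟩, rfl⟩ := hb
  obtain ⟨e, he, rfl⟩ := isSubplane_iff.1 hS
  obtain ⟨a, ha, ha0, rfl⟩ := hPS
  obtain ⟨c, hc, hc0, rfl⟩ := hQS
  simp only [Set.mem_ofPred_eq, submodule_mk, span_singleton_le_iff_mem] at hPW hQW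
  have hac := (mk_ne_mk_iff ha0 hc0).1 hPQ
  refine ⟨a, c, hac, Set.Subset.antisymm ?_ ?_⟩
  · rintro _ ⟨⟨v, hv, hv0, rfl⟩, hvW⟩
    simp only [Set.mem_ofPred_eq, submodule_mk, span_singleton_le_iff_mem] at hvW
    rw [eq_span_pair_of_mem hac hW hPW hQW] at hvW
    exact ⟨v, mem_span_pair_of_mem_span_range he hac ha hc hv hvW, hv0, rfl⟩
  · intro P hP
    refine ⟨points_mono (span_le.2 (Set.pair_subset ha hc)) hP, ?_⟩
    induction P using Projectivization.ind with | h v hv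
    simp only [Set.mem_ofPred_eq, submodule_mk, span_singleton_le_iff_mem]
    exact span_le.2 (Set.pair_subset hPW hQW) (mem_span_of_mk_mem_points_span hP)

lemma finrank_span_pair_add_one (h3 : finrank F K = 3) {x y : K}
    (hxy : LinearIndependent F ![x, y]) : finrank F (span F {x, y}) + 1 = finrank F K := by
  rw [finrank_span_pair hxy, h3]

lemma eq_mk_meetInf (hac : LinearIndependent K ![a, c]) (h0 : meetInf a c ≠ 0)
    {L : Set (PGPoint K)} (hL : IsLine L) (hbL : points K (span F {a, c}) ⊆ L) {X : PGPoint K}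
    (hX : L ∩ linf K = {X}) : X = mk K (meetInf a c) h0 := by
  obtain ⟨W, -, rfl⟩ := hL
  have hmem {v : Fin 3 → K} (hv : v ∈ span F {a, c}) (hv0 : v ≠ 0) : v ∈ W := by
    simpa only [Set.mem_ofPred_eq, submodule_mk, span_singleton_le_iff_mem] using
      hbL ⟨v, hv, hv0, rfl⟩
  have haW : a ∈ W := hmem (subset_span (by simp)) (hac.ne_zero 0)
  have hcW : c ∈ W := hmem (subset_span (by simp)) (hac.ne_zero 1)
  refine (hX.subset ⟨?_, (mk_mem_linf_iff h0).2 (meetInf_apply_two a c)⟩).symm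
  simp only [Set.mem_ofPred_eq, submodule_mk, span_singleton_le_iff_mem]
  exact span_le.2 (Set.pair_subset haW hcW) (meetInf_mem_span_pair a c)

lemma exists_tangentFrame_splash_eq (h3 : finrank F K = 3) {t m n : Fin 3 → K}
    (h : TangentFrame F t m n) (hac : LinearIndependent K ![a, c])
    (hac2 : LinearIndependent F ![a 2, c 2]) {hX : meetInf a c ≠ 0}
    (hXS : mk K (meetInf a c) hX ∈ splash (points K (span F {t, m, n})))
    (hXt : mk K (meetInf a c) hX ≠ mk K t h.left_ne_zero) :
    ∃ t', TangentFrame F t' a c ∧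
      splash (points K (span F {t', a, c})) = splash (points K (span F {t, m, n})) := by
  have : FiniteDimensional F K := .of_finrank_pos (by lia)
  have hXt' (k : K) : k • t ≠ meetInf a c := fun hk ↦
    hXt ((mk_eq_mk_iff' K _ _ _ _).2 ⟨k, hk⟩)
  rw [h.splash_eq] at hXS ⊢
  obtain ⟨s, hs, u, hu, hsu⟩ := exists_smul_add_smul_eq_of_mk_mem_points_club hXS hXt'
  obtain ⟨k, hk, hkU⟩ := exists_smul_eq_of_finrank_add_one_eq
    (finrank_span_pair_add_one h3 hac2)
    (finrank_span_pair_add_one h3 h.linearIndependent_apply_two)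
  have htac : s • k • t ∉ span K {a, c} := by
    intro htac
    obtain ⟨r, hr⟩ := exists_smul_meetInf_eq (.inr (hac2.ne_zero 1)) htac
      (by simp [h.apply_two_eq_zero])
    have hr0 : r ≠ 0 := by
      rintro rfl
      exact smul_ne_zero hs (smul_ne_zero hk h.left_ne_zero) (by rw [← hr, zero_smul])
    exact hXt' (r⁻¹ • s • k) (by rw [smul_assoc, smul_assoc, hr.symm, inv_smul_smul₀ hr0])
  have h' : TangentFrame F (s • k • t) a c :=
    ⟨linearIndependent_triple_iff.2 ⟨hac, htac⟩, by simp [h.apply_two_eq_zero], hac2⟩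
  refine ⟨s • k • t, h', ?_⟩
  rw [h'.splash_eq, ← hsu, ← smul_club, points_smul hs, club_smul_left, hkU, club_add_smul hu]

lemma points_span_eq_of_splash_eq (hodd : Odd (finrank F K)) {t t' : Fin 3 → K}
    (h : TangentFrame F t a c) (h' : TangentFrame F t' a c)
    (hsplash : splash (points K (span F {t, a, c})) = splash (points K (span F {t', a, c}))) :
    points K (span F {t, a, c}) = points K (span F {t', a, c}) := by
  rw [h.splash_eq, h'.splash_eq] at hsplash
  have hw := h.linearIndependent_meetInf
  have hw' := h'.linearIndependent_meetInf
  obtain ⟨k, rfl⟩ := exists_smul_eq_of_points_club_eq hodd h.linearIndependent_apply_two hw hw'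
    hsplash
  obtain ⟨z, rfl⟩ := mem_range_algebraMap_of_points_club_eq hodd h.linearIndependent_apply_two hw
    hw' hsplash
  have hmem {v : Fin 3 → K} (hv : v ∈ ({t, a, c} : Set (Fin 3 → K))) :
      v ∈ span F (Set.range ![t, a, c]) := subset_span (by rwa [range_vecCons_triple])
  rw [span_triple_eq_of_mem h'.linearIndependent (e := ![t, a, c]) _ (hmem (by simp))
    (hmem (by simp)), range_vecCons_triple]
  rw [algebraMap_smul]
  exact smul_mem _ z (hmem (by simp))

end SublinesAndTangentSubplanes

theorem statement9_general {F K : Type*} [Field F] [Field K] [Algebra F K]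
    (h3 : Module.finrank F K = 3) {S : Set (PGPoint K)} {T : PGPoint K}
    (hS : IsTangentSplash F S T) {b L : Set (PGPoint K)} (hb : IsSublineOver F b) (hL : IsLine L)
    (hbL : b ⊆ L) (hdisj : b ∩ linf K = ∅) {X : PGPoint K} (hX : L ∩ linf K = {X}) (hXS : X ∈ S)
    (hXT : X ≠ T) :
    ∃! π : Set (PGPoint K), IsSubplane F π ∧ (∃ T' : PGPoint K, π ∩ linf K = {T'}) ∧
      b ⊆ π ∧ splash π = S := by
  have hodd : Odd (Module.finrank F K) := h3 ▸ by decide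
  obtain ⟨π₀, hπ₀, hT, rfl⟩ := hS
  obtain ⟨t₀, m, n, h₀, rfl⟩ := exists_tangentFrame hπ₀ hT
  obtain rfl : T = mk K t₀ _ := Set.singleton_injective (hT.symm.trans h₀.points_inter_linf)
  obtain ⟨a, c, hac, rfl⟩ := hb.exists_eq_points
  have hac2 := (linearIndependent_apply_two_iff hac).2 hdisj
  have hX0 : meetInf a c ≠ 0 := meetInf_ne_zero hac (hac2.ne_zero 1)
  obtain rfl : X = mk K (meetInf a c) hX0 := eq_mk_meetInf hac hX0 hL hbL hX
  obtain ⟨t, h, hsplash⟩ := exists_tangentFrame_splash_eq h3 h₀ hac hac2 hXS hXT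
  refine ⟨points K (span F {t, a, c}), ⟨h.isSubplane, ⟨_, h.points_inter_linf⟩,
    points_mono (span_mono (by simp)), hsplash⟩, ?_⟩
  rintro _ ⟨hπ, ⟨T', hT'⟩, hbπ, hsplash'⟩
  obtain ⟨t', h', rfl⟩ := exists_tangentFrame_of_points_span_pair_subset hπ hT' hac hbπ hdisj
  exact points_span_eq_of_splash_eq hodd h' h (hsplash'.trans hsplash.symm)

end

/-- given a tangent splash `S` of `ℓ∞` with centre `T` and an
order-`q`-subline `b` disjoint from `ℓ∞` whose spanning line meets `ℓ∞` in a point of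
`S \ {T}`, there is a unique order-`q`-subplane tangent to `ℓ∞` containing `b` with
tangent splash `S`. -/
theorem statement9 (q : ℕ) (F K : Type) [Field F] [Field K] [Fintype F] [Fintype K]
    [Algebra F K] (hF : Fintype.card F = q) (hK : Fintype.card K = q ^ 3)
    (S : Set (PGPoint K)) (T : PGPoint K) (hS : IsTangentSplash F S T)
    (b L : Set (PGPoint K)) (hb : IsSubline F q b) (hL : IsLine L) (hbL : b ⊆ L)
    (hdisj : b ∩ linf K = ∅)
    (X : PGPoint K) (hX : L ∩ linf K = {X}) (hXS : X ∈ S) (hXT : X ≠ T) :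
    ∃! π : Set (PGPoint K), IsSubplane F π ∧ (∃ T' : PGPoint K, π ∩ linf K = {T'}) ∧
      b ⊆ π ∧ splash π = S := by
  have h3 : Module.finrank F K = 3 := finrank_eq_of_card_eq_pow (hF ▸ hK)
  exact statement9_general h3 hS (hb.isSublineOver (hF ▸ Fintype.card_ne_zero)) hL hbL hdisj hX hXS
    hXT

end TangentSplashPaper
end
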